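/- Let g be an integer with |g| > 1 which is not a perfect power (i.e. the maximal h ∈ ℕ with g = g₀^h for some integer g₀ is h = 1) and which is not a perfect square. Let g₁ be the squarefree kernel of g (the unique squarefree integer of the same sign as g such that g/g₁ is a perfect square), and set d = g₁ if g₁ ≡ 1 (mod 4) and d = 4g₁ otherwise (so d is the discriminant of ℚ(√g)). Fix an integer k ≥ 0. Then, with the summation ∑' running over those primes p among the first N primes for which the Legendre symbol (g/p) = −1, the limit as N → ∞ of (∑' p^k φ(p − 1)) / (∑' p^k (p − 1)) exists and equals A(g) = [∏_p (1 − 1/(p(p−1)))] · [1 − μ(|d|) · ∏_{q prime, q | d} 1/(q² − q − 1)], where the first product runs over all primes p and μ is the Möbius function. -/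

import Mathlib

open Filter

/-- Artin's constant `A = ∏_p (1 - 1/(p(p-1)))`, product over all primes. -/
noncomputable def artinConstant : ℝ :=
  ∏' p : Nat.Primes, (1 - 1 / (((p : ℕ) : ℝ) * (((p : ℕ) : ℝ) - 1)))

namespace ArtinAux
open MeasureTheory Complex

/-- The Fejér kernel. -/
noncomputable def fej (u : ℝ) : ℝ := if u = 0 then 1 else 2 * (1 - Real.cos u) / u ^ 2

lemma fej_nonneg (u : ℝ) : 0 ≤ fej u := by
  unfold fej
  split_ifs
  · norm_num
  · have := Real.cos_le_one u
    have : 0 ≤ 1 - Real.cos u := by linarith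
    positivity

lemma fej_le (u : ℝ) : fej u ≤ 5 * (1 + u ^ 2)⁻¹ := by
  unfold fej
  split_ifs with h
  · simp [h]
  · have h0 : 0 < u ^ 2 := by positivity
    rw [← div_eq_mul_inv, div_le_div_iff₀ h0 (by positivity)]
    have h1 := @Real.one_sub_sq_div_two_le_cos u
    have h2 := Real.neg_one_le_cos u
    nlinarith

lemma fej_measurable : Measurable fej := by
  unfold fej
  refine Measurable.ite (measurableSet_singleton 0) measurable_const ?_
  fun_prop

lemma fej_integrable : Integrable fej := by
  refine (integrable_inv_one_add_sq.const_mul 5).mono' fej_measurable.aestronglyMeasurable ?_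
  filter_upwards with u
  rw [Real.norm_of_nonneg (fej_nonneg u)]
  exact fej_le u

lemma fej_eq (u : ℝ) :
    ∫ t in (-1 : ℝ)..1, ((1 - |t| : ℝ) : ℂ) * cexp (I * t * u) = (fej u : ℂ) := by
  have hc : Continuous fun t : ℝ => ((1 - |t| : ℝ) : ℂ) * cexp (I * t * u) := by fun_prop
  rw [← intervalIntegral.integral_add_adjacent_intervals (b := 0)
    (hc.intervalIntegrable _ _) (hc.intervalIntegrable _ _)]
  have e1 : ∫ t in (0 : ℝ)..1, ((1 - |t| : ℝ) : ℂ) * cexp (I * t * u) =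
      ∫ t in (0 : ℝ)..1, (1 - t : ℂ) * cexp (I * u * t) := by
    apply intervalIntegral.integral_congr
    intro t ht
    rw [Set.uIcc_of_le (by norm_num)] at ht
    simp only [abs_of_nonneg ht.1]
    push_cast; ring_nf
  have e2 : ∫ t in (-1 : ℝ)..0, ((1 - |t| : ℝ) : ℂ) * cexp (I * t * u) =
      ∫ t in (-1 : ℝ)..0, (1 + t : ℂ) * cexp (I * u * t) := by
    apply intervalIntegral.integral_congr
    intro t ht
    rw [Set.uIcc_of_le (by norm_num)] at ht
    simp only [abs_of_nonpos ht.2]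
    push_cast; ring_nf
  rw [e1, e2]
  by_cases hu : u = 0
  · have d1 : ∫ t in (0 : ℝ)..1, (1 - t : ℂ) = 1 / 2 := by
      rw [intervalIntegral.integral_eq_sub_of_hasDerivAt (f := fun t : ℝ => (t - t ^ 2 / 2 : ℂ))]
      · norm_num
      · intro x _
        have := ((hasDerivAt_id (x : ℂ)).sub (((hasDerivAt_id (x : ℂ)).pow 2).div_const 2)).comp_ofReal
        refine HasDerivAt.congr_deriv this ?_
        simp
      · exact (by fun_prop : Continuous fun t : ℝ => (1 - t : ℂ)).intervalIntegrable _ _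
    have d2 : ∫ t in (-1 : ℝ)..0, (1 + t : ℂ) = 1 / 2 := by
      rw [intervalIntegral.integral_eq_sub_of_hasDerivAt (f := fun t : ℝ => (t + t ^ 2 / 2 : ℂ))]
      · norm_num
      · intro x _
        have := ((hasDerivAt_id (x : ℂ)).add (((hasDerivAt_id (x : ℂ)).pow 2).div_const 2)).comp_ofReal
        refine HasDerivAt.congr_deriv this ?_
        simp
      · exact (by fun_prop : Continuous fun t : ℝ => (1 + t : ℂ)).intervalIntegrable _ _
    simp [hu, fej, d1, d2]; norm_num
  · have hc : (I * u : ℂ) ≠ 0 := by simp [hu]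
    have hexp : ∀ x : ℝ, HasDerivAt (fun t : ℂ => cexp (I * u * t)) (cexp (I * u * x) * (I * u)) x := by
      intro x
      have := ((hasDerivAt_id (x : ℂ)).const_mul (I * u)).cexp
      simpa using this
    have d1 : ∫ t in (0 : ℝ)..1, (1 - t : ℂ) * cexp (I * u * t) =
        cexp (I * u) / (I * u) ^ 2 - (1 / (I * u) + 1 / (I * u) ^ 2) := by
      rw [intervalIntegral.integral_eq_sub_of_hasDerivAt
        (f := fun t : ℝ => ((1 - t) * cexp (I * u * t) / (I * u) + cexp (I * u * t) / (I * u) ^ 2 : ℂ))]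
      · simp
      · intro x _
        have := ((((hasDerivAt_id (x : ℂ)).const_sub 1).mul (hexp x)).div_const (I * u) |>.add
          ((hexp x).div_const ((I * u) ^ 2))).comp_ofReal
        refine HasDerivAt.congr_deriv this ?_
        simp only [id]
        have hu' : (u : ℂ) ≠ 0 := by exact_mod_cast hu
        field_simp
        ring
      · exact (by fun_prop : Continuous fun t : ℝ => (1 - t : ℂ) * cexp (I * u * t)).intervalIntegrable _ _
    have d2 : ∫ t in (-1 : ℝ)..0, (1 + t : ℂ) * cexp (I * u * t) =
        cexp (-(I * u)) / (I * u) ^ 2 + (1 / (I * u) - 1 / (I * u) ^ 2) := by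
      rw [intervalIntegral.integral_eq_sub_of_hasDerivAt
        (f := fun t : ℝ => ((1 + t) * cexp (I * u * t) / (I * u) - cexp (I * u * t) / (I * u) ^ 2 : ℂ))]
      · simp; ring
      · intro x _
        have := ((((hasDerivAt_id (x : ℂ)).const_add 1).mul (hexp x)).div_const (I * u) |>.sub
          ((hexp x).div_const ((I * u) ^ 2))).comp_ofReal
        refine HasDerivAt.congr_deriv this ?_
        simp only [id]
        have hu' : (u : ℂ) ≠ 0 := by exact_mod_cast hu
        field_simp
        ring
      · exact (by fun_prop : Continuous fun t : ℝ => (1 + t : ℂ) * cexp (I * u * t)).intervalIntegrable _ _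
    rw [d1, d2]
    simp only [fej, hu, if_false]
    push_cast
    rw [Complex.cos, mul_pow, I_sq, mul_comm I (u : ℂ), ← neg_mul]
    have hu' : (u : ℂ) ≠ 0 := by exact_mod_cast hu
    field_simp
    ring

lemma fejer_tauber (b : ℝ → ℝ) (hb : Measurable b) (C : ℝ) (hC : ∀ v, |b v| ≤ C)
    (g : ℂ → ℂ) (hg : ContinuousOn g {s | 0 ≤ s.re})
    (hL : ∀ s : ℂ, 0 < s.re → ∫ v in Set.Ioi (0 : ℝ), (b v : ℂ) * cexp (-s * v) = g s)
    (T : ℝ) (hT : 0 < T) :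
    Tendsto (fun y : ℝ => ∫ v in Set.Ioi (0 : ℝ), b v * fej (T * (y - v))) atTop (nhds 0) := by
  have hC0 : 0 ≤ C := (abs_nonneg _).trans (hC 0)
  -- step 1
  have h1 : ∀ ε : ℝ, 0 < ε → ∀ y : ℝ,
      ∫ t in (-1 : ℝ)..1, ((1 - |t| : ℝ) : ℂ) * cexp (I * t * (T * y : ℝ)) * g (ε + I * (T * t)) =
      ((∫ v in Set.Ioi (0 : ℝ), b v * Real.exp (-ε * v) * fej (T * (y - v)) : ℝ) : ℂ) := by
    intro ε hε y
    rw [← integral_complex_ofReal]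
    have e1 : ∀ t : ℝ, ((1 - |t| : ℝ) : ℂ) * cexp (I * t * (T * y : ℝ)) * g (ε + I * (T * t)) =
        ∫ v in Set.Ioi (0 : ℝ), (b v * Real.exp (-ε * v) : ℂ) *
          (((1 - |t| : ℝ) : ℂ) * cexp (I * t * (T * (y - v) : ℝ))) := by
      intro t
      rw [← hL _ (by simp [hε]), ← integral_const_mul]
      congr 1; ext v
      have : cexp (I * t * (T * y : ℝ)) * cexp (-(ε + I * (T * t)) * v) =
          (Real.exp (-ε * v) : ℂ) * cexp (I * t * (T * (y - v) : ℝ)) := by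
        push_cast
        rw [← Complex.exp_add, ← Complex.exp_add]; ring_nf
      linear_combination ((1 - |t| : ℝ) : ℂ) * (b v : ℂ) * this
    simp_rw [e1]
    rw [intervalIntegral.integral_of_le (by norm_num), integral_integral_swap]
    · congr 1; ext v
      rw [integral_const_mul, ← intervalIntegral.integral_of_le (by norm_num), fej_eq]
      push_cast; ring
    · have i1 : Integrable (fun v : ℝ => C * Real.exp (-ε * v)) (volume.restrict (Set.Ioi 0)) :=
        (integrableOn_exp_mul_Ioi (neg_lt_zero.mpr hε) 0).const_mul C
      have i2 : Integrable (fun t : ℝ => (1 : ℝ)) (volume.restrict (Set.Ioc (-1 : ℝ) 1)) :=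
        integrable_const _
      refine (i2.mul_prod i1).mono' ?_ ?_
      · apply Measurable.aestronglyMeasurable
        have : Measurable fun p : ℝ × ℝ => b p.2 := hb.comp measurable_snd
        unfold Function.uncurry
        fun_prop
      · rw [Measure.prod_restrict]
        filter_upwards [ae_restrict_mem (measurableSet_Ioc.prod measurableSet_Ioi)] with p hp
        obtain ⟨hp1, hp2⟩ := hp
        simp only [Function.uncurry]
        have n1 : ‖cexp (I * p.1 * (T * (y - p.2) : ℝ))‖ = 1 := by
          rw [show I * p.1 * (T * (y - p.2) : ℝ) = ((p.1 * (T * (y - p.2)) : ℝ) : ℂ) * I by push_cast; ring]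
          exact norm_exp_ofReal_mul_I _
        have n2 : abs (1 - abs p.1) ≤ 1 := by
          have : |p.1| ≤ 1 := abs_le.mpr ⟨hp1.1.le, hp1.2⟩
          rw [abs_of_nonneg (by linarith)]
          linarith [abs_nonneg p.1]
        rw [norm_mul, norm_mul, norm_mul, n1, Complex.norm_real, Complex.norm_real, Complex.norm_real,
          Real.norm_eq_abs, Real.norm_eq_abs, Real.norm_eq_abs, Real.abs_exp, mul_one, one_mul]
        calc |b p.2| * Real.exp (-ε * p.2) * abs (1 - abs p.1) ≤ C * Real.exp (-ε * p.2) * 1 := by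
              gcongr
              exact hC _
          _ = _ := by ring
  -- step 2
  have hcont : ContinuousOn (fun p : ℝ × ℝ => g (p.1 + I * (T * p.2))) (Set.Ici 0 ×ˢ Set.univ) := by
    refine hg.comp (by fun_prop) ?_
    intro p hp
    simpa using hp.1
  have h2 : ∀ y : ℝ,
      ∫ t in (-1 : ℝ)..1, ((1 - |t| : ℝ) : ℂ) * cexp (I * t * (T * y : ℝ)) * g (I * (T * t)) =
      ((∫ v in Set.Ioi (0 : ℝ), b v * fej (T * (y - v)) : ℝ) : ℂ) := by
    intro y
    obtain ⟨B, hB⟩ := ((isCompact_Icc (a := (0 : ℝ)) (b := 1)).prod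
      (isCompact_Icc (a := (-1 : ℝ)) (b := 1))).exists_bound_of_continuousOn
      (hcont.mono (Set.prod_mono Set.Icc_subset_Ici_self (Set.subset_univ _)))
    have hev : ∀ᶠ ε : ℝ in nhdsWithin 0 (Set.Ioi 0), 0 < ε ∧ ε ≤ 1 := by
      filter_upwards [Ioc_mem_nhdsGT (show (0 : ℝ) < 1 by norm_num)] with ε h using h
    have l1 : Tendsto (fun ε : ℝ => ∫ t in (-1 : ℝ)..1, ((1 - |t| : ℝ) : ℂ) *
        cexp (I * t * (T * y : ℝ)) * g (ε + I * (T * t))) (nhdsWithin 0 (Set.Ioi 0))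
        (nhds (∫ t in (-1 : ℝ)..1, ((1 - |t| : ℝ) : ℂ) * cexp (I * t * (T * y : ℝ)) *
          g (((0 : ℝ) : ℂ) + I * (T * t)))) := by
      apply intervalIntegral.tendsto_integral_filter_of_dominated_convergence (fun _ => B)
      · filter_upwards [hev] with ε hε
        have : Continuous fun t : ℝ => g (ε + I * (T * t)) := by
          rw [← continuousOn_univ]
          refine hg.comp (by fun_prop) ?_
          intro t _
          simp [hε.1.le]
        exact ((by fun_prop : Continuous fun t : ℝ => ((1 - |t| : ℝ) : ℂ) *
          cexp (I * t * (T * y : ℝ))).mul this).aestronglyMeasurable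
      · filter_upwards [hev] with ε hε
        filter_upwards with t ht
        rw [Set.uIoc_of_le (by norm_num)] at ht
        have n1 : ‖cexp (I * t * (T * y : ℝ))‖ = 1 := by
          rw [show I * t * (T * y : ℝ) = ((t * (T * y) : ℝ) : ℂ) * I by push_cast; ring]
          exact norm_exp_ofReal_mul_I _
        have n2 : abs (1 - abs t) ≤ 1 := by
          have : |t| ≤ 1 := abs_le.mpr ⟨ht.1.le, ht.2⟩
          rw [abs_of_nonneg (by linarith)]
          linarith [abs_nonneg t]
        have := hB (ε, t) ⟨⟨hε.1.le, hε.2⟩, ⟨ht.1.le, ht.2⟩⟩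
        rw [norm_mul, norm_mul, n1, mul_one, Complex.norm_real, Real.norm_eq_abs]
        calc _ ≤ 1 * B := by gcongr
          _ = B := one_mul _
      · exact intervalIntegrable_const
      · filter_upwards with t _
        refine Tendsto.const_mul _ ?_
        have h := hcont (0, t) ⟨by simp, trivial⟩
        have hmap : Tendsto (fun ε : ℝ => (ε, t)) (nhdsWithin 0 (Set.Ioi 0))
            (nhdsWithin (0, t) (Set.Ici 0 ×ˢ Set.univ)) := by
          refine tendsto_nhdsWithin_iff.mpr ⟨?_, ?_⟩
          · exact ((by fun_prop : Continuous fun ε : ℝ => (ε, t)).tendsto 0).mono_left nhdsWithin_le_nhds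
          · filter_upwards [hev] with ε hε
            exact ⟨hε.1.le, trivial⟩
        exact h.tendsto.comp hmap
    have l2 : Tendsto (fun ε : ℝ => ∫ v in Set.Ioi (0 : ℝ), b v * Real.exp (-ε * v) * fej (T * (y - v)))
        (nhdsWithin 0 (Set.Ioi 0))
        (nhds (∫ v in Set.Ioi (0 : ℝ), b v * fej (T * (y - v)))) := by
      have hm : Measurable fun v => fej (T * (y - v)) := fej_measurable.comp (by fun_prop)
      have hIntgr : Integrable fun v => fej (T * (y - v)) :=
        (fej_integrable.comp_mul_left' hT.ne').comp_sub_left y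
      apply tendsto_integral_filter_of_dominated_convergence (fun v => C * fej (T * (y - v)))
      · filter_upwards with ε
        exact (by fun_prop : Measurable fun v => b v * Real.exp (-ε * v) * fej (T * (y - v))).aestronglyMeasurable
      · filter_upwards [hev] with ε hε
        filter_upwards [ae_restrict_mem measurableSet_Ioi] with v hv
        rw [norm_mul, norm_mul, Real.norm_of_nonneg (fej_nonneg _), Real.norm_eq_abs, Real.norm_eq_abs,
          Real.abs_exp]
        have e1 : Real.exp (-ε * v) ≤ 1 := by
          rw [Real.exp_le_one_iff]
          have := mul_pos hε.1 hv
          linarith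
        calc _ ≤ C * 1 * fej (T * (y - v)) := by
              gcongr
              · exact fej_nonneg _
              · exact hC v
          _ = _ := by ring
      · exact (hIntgr.const_mul C).integrableOn
      · filter_upwards with v
        have : Tendsto (fun ε : ℝ => b v * Real.exp (-ε * v) * fej (T * (y - v))) (nhds 0)
            (nhds (b v * Real.exp (-0 * v) * fej (T * (y - v)))) :=
          (by fun_prop : Continuous fun ε : ℝ => b v * Real.exp (-ε * v) * fej (T * (y - v))).tendsto 0
        simp only [neg_zero, zero_mul, Real.exp_zero, mul_one] at this
        exact this.mono_left nhdsWithin_le_nhds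
    have l3 := (continuous_ofReal.tendsto _).comp l2
    have := tendsto_nhds_unique_of_eventuallyEq l1 l3 (by
      filter_upwards [hev] with ε hε
      exact h1 ε hε.1 y)
    simpa using this
  -- step 3 : Riemann-Lebesgue
  have h3 := Real.tendsto_integral_exp_smul_cocompact
    ((Set.Ioc (-1 : ℝ) 1).indicator fun t : ℝ => ((1 - |t| : ℝ) : ℂ) * g (I * (T * t)))
  have h4 : Tendsto (fun y : ℝ => -(T * y / (2 * Real.pi))) atTop (cocompact ℝ) := by
    refine Tendsto.mono_right ?_ atBot_le_cocompact
    refine tendsto_neg_atTop_atBot.comp ?_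
    exact (tendsto_id.const_mul_atTop hT).atTop_div_const (by positivity)
  have h5 := h3.comp h4
  have h6 : Tendsto (fun y : ℝ => ((∫ v in Set.Ioi (0 : ℝ), b v * fej (T * (y - v)) : ℝ) : ℂ))
      atTop (nhds 0) := by
    refine h5.congr fun y => ?_
    rw [← h2 y, intervalIntegral.integral_of_le (by norm_num), ← integral_indicator measurableSet_Ioc]
    simp only [Function.comp]
    congr 1; ext t
    by_cases ht : t ∈ Set.Ioc (-1 : ℝ) 1
    · rw [Set.indicator_of_mem ht, Set.indicator_of_mem ht, Circle.smul_def, Real.fourierChar_apply, smul_eq_mul]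
      have : ((2 * Real.pi * -(t * -(T * y / (2 * Real.pi))) : ℝ) : ℂ) * I = I * t * (T * y : ℝ) := by
        have := Real.pi_pos.ne'
        rw [show 2 * Real.pi * -(t * -(T * y / (2 * Real.pi))) = t * (T * y) by field_simp]
        push_cast; ring
      rw [this]; ring
    · rw [Set.indicator_of_notMem ht, Set.indicator_of_notMem ht, smul_zero]
  have h7 := (continuous_re.tendsto _).comp h6
  simpa [Function.comp_def] using h7

end ArtinAux

namespace ArtinAux
open MeasureTheory Complex

lemma fej_int_pos : 0 < ∫ u, fej u := by
  rw [integral_pos_iff_support_of_nonneg fej_nonneg fej_integrable]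
  have : Set.Ioo (0 : ℝ) 1 ⊆ Function.support fej := by
    intro u hu
    simp only [Function.mem_support, fej, hu.1.ne', if_false]
    have h1 : Real.cos u < 1 := by
      have := Real.cos_lt_cos_of_nonneg_of_le_pi_div_two (le_refl 0)
        (by linarith [hu.2, Real.pi_gt_three]) hu.1
      simpa using this
    have h2 : 0 < 1 - Real.cos u := by linarith
    have h3 := hu.1
    positivity
  refine lt_of_lt_of_le ?_ (measure_mono this)
  simp

lemma wi_tauber (B : ℝ → ℝ) (hB : Measurable B) (C A : ℝ) (hB0 : ∀ v, 0 ≤ B v) (hBC : ∀ v, B v ≤ C)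
    (hmono : ∀ v w, v ≤ w → B v * Real.exp v ≤ B w * Real.exp w)
    (hK : ∀ T : ℝ, 0 < T → Tendsto (fun y : ℝ => ∫ v in Set.Ioi (0 : ℝ), (B v - A) * fej (T * (y - v)))
      atTop (nhds 0)) :
    Tendsto B atTop (nhds A) := by
  set c := ∫ u, fej u with hc
  have hc0 : 0 < c := fej_int_pos
  have hC0 : 0 ≤ C := (hB0 0).trans (hBC 0)
  have hIntgr : ∀ (T y : ℝ), Integrable fun u => B (y - u / T) * fej u := by
    intro T y
    refine (fej_integrable.const_mul C).mono' ?_ ?_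
    · exact ((hB.comp (by fun_prop)).mul fej_measurable).aestronglyMeasurable
    · filter_upwards with u
      rw [norm_mul, Real.norm_of_nonneg (fej_nonneg u), Real.norm_of_nonneg (hB0 _)]
      exact mul_le_mul_of_nonneg_right (hBC _) (fej_nonneg u)
  have hI : ∀ T : ℝ, 0 < T → Tendsto (fun y : ℝ => ∫ u, B (y - u / T) * fej u) atTop (nhds (A * c)) := by
    intro T hT
    have hm : ∀ y : ℝ, Measurable fun v => fej (T * (y - v)) := fun y => fej_measurable.comp (by fun_prop)
    have hint1 : ∀ y : ℝ, Integrable fun v => fej (T * (y - v)) := fun y =>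
        (fej_integrable.comp_mul_left' hT.ne').comp_sub_left y
    have hbd : ∀ v, |B v - A| ≤ C + |A| := fun v => by
      have := abs_sub (B v) A
      rw [abs_of_nonneg (hB0 v)] at this
      linarith [hBC v]
    have hint2 : ∀ y : ℝ, Integrable fun v => (B v - A) * fej (T * (y - v)) := by
      intro y
      refine ((hint1 y).const_mul (C + |A|)).mono' ?_ ?_
      · exact ((hB.sub_const A).mul (hm y)).aestronglyMeasurable
      · filter_upwards with u
        rw [norm_mul, Real.norm_of_nonneg (fej_nonneg _)]
        exact mul_le_mul_of_nonneg_right (hbd _) (fej_nonneg _)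
    have t1 : Tendsto (fun y : ℝ => ∫ v in Set.Iic (0 : ℝ), (B v - A) * fej (T * (y - v)))
        atTop (nhds (∫ v in Set.Iic (0 : ℝ), (0 : ℝ))) := by
      apply tendsto_integral_filter_of_dominated_convergence
        (fun v => (C + |A|) * (5 * (1 + (T * v) ^ 2)⁻¹))
      · filter_upwards with y using ((hB.sub_const A).mul (hm y)).aestronglyMeasurable
      · filter_upwards [eventually_ge_atTop 0] with y hy
        filter_upwards [ae_restrict_mem measurableSet_Iic] with v hv
        rw [norm_mul, Real.norm_of_nonneg (fej_nonneg _)]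
        have h1 : fej (T * (y - v)) ≤ 5 * (1 + (T * v) ^ 2)⁻¹ := by
          refine (fej_le _).trans ?_
          gcongr 5 * (1 + ?_)⁻¹
          rw [mul_pow, mul_pow]
          have hv' : v ≤ 0 := hv
          have : v ^ 2 ≤ (y - v) ^ 2 := by nlinarith
          gcongr
        exact mul_le_mul (hbd v) h1 (fej_nonneg _) (by positivity)
      · exact (((integrable_inv_one_add_sq.comp_mul_left' hT.ne').const_mul 5).const_mul _).integrableOn
      · filter_upwards with v
        have : Tendsto (fun y : ℝ => fej (T * (y - v))) atTop (nhds 0) := by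
          have h1 : Tendsto (fun y : ℝ => 5 * (1 + (T * (y - v)) ^ 2)⁻¹) atTop (nhds (5 * 0)) := by
            refine Tendsto.const_mul _ (tendsto_inv_atTop_zero.comp ?_)
            refine tendsto_atTop_add_const_left _ _ ((tendsto_pow_atTop (by norm_num)).comp ?_)
            exact (tendsto_atTop_add_const_right _ (-v) tendsto_id).const_mul_atTop hT
          rw [mul_zero] at h1
          exact squeeze_zero (fun y => fej_nonneg _) (fun y => fej_le _) h1
        simpa using this.const_mul (B v - A)
    rw [integral_zero] at t1
    have t2 := (hK T hT).add t1
    have t4 := (t2.const_mul T).add_const (A * c)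
    rw [add_zero, mul_zero, zero_add] at t4
    refine t4.congr fun y => ?_
    have s1' : (∫ v in Set.Ioi (0 : ℝ), (B v - A) * fej (T * (y - v))) +
        (∫ v in Set.Iic (0 : ℝ), (B v - A) * fej (T * (y - v))) = ∫ v, (B v - A) * fej (T * (y - v)) := by
      rw [add_comm, ← Set.compl_Iic]
      exact integral_add_compl measurableSet_Iic (hint2 y)
    rw [s1']
    have s2 : ∫ v, (B v - A) * fej (T * (y - v)) = T⁻¹ * ∫ u, (B (y - u / T) - A) * fej u := by
      have a1 := integral_sub_left_eq_self (fun w => (B (y - w) - A) * fej (T * w)) volume y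
      simp only [sub_sub_cancel] at a1
      rw [a1]
      have a2 := Measure.integral_comp_mul_left (fun u => (B (y - u / T) - A) * fej u) T
      rw [abs_of_pos (inv_pos.mpr hT), smul_eq_mul] at a2
      rw [← a2]
      congr 1; ext w
      rw [mul_div_cancel_left₀ _ hT.ne']
    rw [s2, mul_inv_cancel_left₀ hT.ne']
    simp_rw [sub_mul]
    rw [integral_sub (hIntgr T y) (fej_integrable.const_mul A), integral_const_mul]
    ring
  have hR : ∀ η : ℝ, 0 < η → ∃ R : ℝ, 0 < R ∧ c - η < ∫ u in Set.Ioc (-R) R, fej u := by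
    intro η hη
    have := intervalIntegral_tendsto_integral fej_integrable tendsto_neg_atTop_atBot tendsto_id
    have h2 := (this.eventually (lt_mem_nhds (show c - η < c by linarith))).and (eventually_gt_atTop 0)
    obtain ⟨R, h3, h4⟩ := h2.exists
    refine ⟨R, h4, ?_⟩
    rwa [intervalIntegral.integral_of_le (by simp only [id]; linarith)] at h3
  have hup : ∀ η : ℝ, 0 < η → η < c → ∀ᶠ y in atTop, B y ≤ Real.exp (2 * η) * (A * c + η) / (c - η) := by
    intro η hη hηc
    obtain ⟨R, hR0, hR1⟩ := hR η hη
    have hT : 0 < R / η := by positivity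
    have h1 := (hI _ hT).comp (tendsto_atTop_add_const_right _ η tendsto_id)
    filter_upwards [h1.eventually (gt_mem_nhds (show A * c < A * c + η by linarith))] with y hy
    simp only [Function.comp, id] at hy
    have h2 : B y * Real.exp (-(2 * η)) * (c - η) ≤ ∫ u, B (y + η - u / (R / η)) * fej u := by
      calc B y * Real.exp (-(2 * η)) * (c - η) ≤ B y * Real.exp (-(2 * η)) * ∫ u in Set.Ioc (-R) R, fej u := by
            have := hB0 y
            gcongr
        _ = ∫ u in Set.Ioc (-R) R, B y * Real.exp (-(2 * η)) * fej u := (integral_const_mul _ _).symm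
        _ ≤ ∫ u in Set.Ioc (-R) R, B (y + η - u / (R / η)) * fej u := by
            refine setIntegral_mono_on (fej_integrable.const_mul _).integrableOn (hIntgr _ _).integrableOn
              measurableSet_Ioc ?_
            intro u hu
            refine mul_le_mul_of_nonneg_right ?_ (fej_nonneg u)
            have e1 : u / (R / η) ≤ η := by
              rw [div_le_iff₀ hT]; field_simp; exact hu.2
            have e2 : -η ≤ u / (R / η) := by
              rw [le_div_iff₀ hT]; field_simp; exact hu.1.le
            have e3 := hmono y (y + η - u / (R / η)) (by linarith)
            set w := y + η - u / (R / η)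
            have e4 : B y * Real.exp (-(2 * η)) * Real.exp w ≤ B w * Real.exp w := by
              refine le_trans ?_ e3
              rw [mul_assoc, ← Real.exp_add]
              refine mul_le_mul_of_nonneg_left ?_ (hB0 y)
              exact Real.exp_le_exp.mpr (by simp only [w]; linarith)
            exact le_of_mul_le_mul_right e4 (Real.exp_pos _)
        _ ≤ _ := setIntegral_le_integral (hIntgr _ _) (by
            filter_upwards with u using mul_nonneg (hB0 _) (fej_nonneg _))
    rw [le_div_iff₀ (by linarith)]
    have h3 := mul_le_mul_of_nonneg_left (h2.trans hy.le) (Real.exp_pos (2 * η)).le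
    calc B y * (c - η) = Real.exp (2 * η) * (B y * Real.exp (-(2 * η)) * (c - η)) := by
          rw [Real.exp_neg]; field_simp
      _ ≤ _ := h3
  have hlo : ∀ η : ℝ, 0 < η → ∀ᶠ y in atTop, Real.exp (-(2 * η)) * (A * c - η - C * η) / c ≤ B y := by
    intro η hη
    obtain ⟨R, hR0, hR1⟩ := hR η hη
    have hT : 0 < R / η := by positivity
    have h1 := (hI _ hT).comp (tendsto_atTop_add_const_right _ (-η) tendsto_id)
    filter_upwards [h1.eventually (lt_mem_nhds (show A * c - η < A * c by linarith))] with y hy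
    simp only [Function.comp, id] at hy
    have h2 : ∫ u, B (y + -η - u / (R / η)) * fej u ≤ Real.exp (2 * η) * B y * c + C * η := by
      calc ∫ u, B (y + -η - u / (R / η)) * fej u
          ≤ ∫ u, (Real.exp (2 * η) * B y * fej u + C * (Set.Ioc (-R) R)ᶜ.indicator fej u) := by
            refine integral_mono (hIntgr _ _) ((fej_integrable.const_mul _).add
              ((fej_integrable.indicator measurableSet_Ioc.compl).const_mul _)) ?_
            intro u
            simp only
            by_cases hu : u ∈ Set.Ioc (-R) R
            · rw [Set.indicator_of_notMem (by simpa using hu), mul_zero, add_zero]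
              refine mul_le_mul_of_nonneg_right ?_ (fej_nonneg u)
              have e1 : u / (R / η) ≤ η := by
                rw [div_le_iff₀ hT]; field_simp; exact hu.2
              have e2 : -η ≤ u / (R / η) := by
                rw [le_div_iff₀ hT]; field_simp; exact hu.1.le
              have e3 := hmono (y + -η - u / (R / η)) y (by linarith)
              set w := y + -η - u / (R / η)
              have e4 : B w * Real.exp w ≤ Real.exp (2 * η) * B y * Real.exp w := by
                refine e3.trans ?_
                rw [mul_comm (Real.exp (2 * η)), mul_assoc, ← Real.exp_add]
                refine mul_le_mul_of_nonneg_left ?_ (hB0 y)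
                exact Real.exp_le_exp.mpr (by simp only [w]; linarith)
              exact le_of_mul_le_mul_right e4 (Real.exp_pos _)
            · rw [Set.indicator_of_mem (by simpa using hu)]
              have e1 : B (y + -η - u / (R / η)) * fej u ≤ C * fej u :=
                mul_le_mul_of_nonneg_right (hBC _) (fej_nonneg u)
              have e2 : 0 ≤ Real.exp (2 * η) * B y * fej u :=
                mul_nonneg (mul_nonneg (Real.exp_pos _).le (hB0 y)) (fej_nonneg u)
              linarith
        _ = Real.exp (2 * η) * B y * c + C * (c - ∫ u in Set.Ioc (-R) R, fej u) := by
            rw [integral_add (fej_integrable.const_mul _)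
              ((fej_integrable.indicator measurableSet_Ioc.compl).const_mul _), integral_const_mul,
              integral_const_mul, integral_indicator measurableSet_Ioc.compl,
              ← integral_add_compl measurableSet_Ioc fej_integrable (s := Set.Ioc (-R) R)] 
            simp only [hc, ← integral_add_compl measurableSet_Ioc fej_integrable (s := Set.Ioc (-R) R)]
            ring
        _ ≤ _ := by
            gcongr
            linarith
    rw [div_le_iff₀ hc0]
    have h3 : A * c - η - C * η ≤ Real.exp (2 * η) * B y * c := by linarith
    have h4 := mul_le_mul_of_nonneg_left h3 (Real.exp_pos (-(2 * η))).le
    calc _ ≤ _ := h4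
      _ = B y * c := by rw [Real.exp_neg]; field_simp
  rw [tendsto_order]
  have hlim0 : ∀ f : ℝ → ℝ, ContinuousAt f 0 → Tendsto f (nhdsWithin 0 (Set.Ioi 0)) (nhds (f 0)) :=
    fun f hf => hf.tendsto.mono_left nhdsWithin_le_nhds
  constructor
  · intro a ha
    have h := hlim0 (fun η => Real.exp (-(2 * η)) * (A * c - η - C * η) / c)
      (by fun_prop (disch := exact hc0.ne'))
    have e : (Real.exp (-(2 * 0)) * (A * c - 0 - C * 0) / c) = A := by
      simp [hc0.ne']
    rw [e] at h
    obtain ⟨η, h1, h2⟩ := ((h.eventually (lt_mem_nhds ha)).and self_mem_nhdsWithin).exists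
    filter_upwards [hlo η h2] with y hy using h1.trans_le hy
  · intro a ha
    have h := hlim0 (fun η => Real.exp (2 * η) * (A * c + η) / (c - η))
      (ContinuousAt.div (by fun_prop) (by fun_prop) (by simp [hc0.ne']))
    have e : (Real.exp (2 * 0) * (A * c + 0) / (c - 0)) = A := by
      simp [hc0.ne']
    rw [e] at h
    obtain ⟨η, h1, h2, h3⟩ := ((h.eventually (gt_mem_nhds ha)).and (Ioo_mem_nhdsGT hc0)).exists
    filter_upwards [hup η h2 h3] with y hy using hy.trans_lt h1

end ArtinAux

namespace ArtinAux
open MeasureTheory Complex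

theorem wiener_ikehara (a : ℕ → ℝ) (ha : ∀ n, 0 ≤ a n) (C : ℝ)
    (hC : ∀ x : ℝ, 0 ≤ x → ∑ k ∈ Finset.Icc 1 ⌊x⌋₊, a k ≤ C * x)
    (A : ℝ) (G : ℂ → ℂ) (hG : ContinuousOn G {s | 1 ≤ s.re})
    (hGL : ∀ s : ℂ, 1 < s.re → G s = LSeries (fun n => (a n : ℂ)) s - A / (s - 1)) :
    Tendsto (fun x : ℝ => (∑ k ∈ Finset.Icc 1 ⌊x⌋₊, a k) / x) atTop (nhds A) := by
  set S : ℝ → ℝ := fun x => ∑ k ∈ Finset.Icc 1 ⌊x⌋₊, a k with hS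
  have hSmono : Monotone S := by
    intro x y hxy
    apply Finset.sum_le_sum_of_subset_of_nonneg
    · exact Finset.Icc_subset_Icc_right (Nat.floor_mono hxy)
    · intro i _ _; exact ha i
  have hS0 : ∀ x, 0 ≤ S x := fun x => Finset.sum_nonneg fun i _ => ha i
  have hC0 : 0 ≤ C := by
    have := (hS0 1).trans (hC 1 zero_le_one); linarith
  set B : ℝ → ℝ := fun v => S (Real.exp v) * Real.exp (-v) with hB
  have hBm : Measurable B := (hSmono.measurable.comp Real.measurable_exp).mul (by fun_prop)
  have hB0 : ∀ v, 0 ≤ B v := fun v => mul_nonneg (hS0 _) (Real.exp_pos _).le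
  have hBC : ∀ v, B v ≤ C := fun v => by
    have := mul_le_mul_of_nonneg_right (hC _ (Real.exp_pos v).le) (Real.exp_pos (-v)).le
    rwa [mul_assoc, ← Real.exp_add, add_neg_cancel, Real.exp_zero, mul_one] at this
  have hlim : Tendsto B atTop (nhds A) := by
    refine wi_tauber B hBm C A hB0 hBC ?_ ?_
    · intro v w h
      simp only [hB]
      rw [mul_assoc, mul_assoc, ← Real.exp_add, ← Real.exp_add]
      simpa using hSmono (Real.exp_le_exp.mpr h)
    · refine fejer_tauber (fun v => B v - A) (hBm.sub_const A) (C + |A|) ?_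
        (fun s => (G (s + 1) - A) / (s + 1)) ?_ ?_
      · intro v
        have := abs_sub (B v) A
        rw [abs_of_nonneg (hB0 v)] at this
        linarith [hBC v]
      · apply ContinuousOn.div
        · refine ContinuousOn.sub (hG.comp (by fun_prop) ?_) continuousOn_const
          intro s hs
          simpa using hs
        · fun_prop
        · intro s hs h0
          have : (s + 1).re = 0 := by rw [h0]; simp
          simp at this
          have hs' : 0 ≤ s.re := hs
          linarith
      · intro s hs
        have hs0 : s ≠ 0 := by rintro rfl; simp at hs
        have hs1 : s + 1 ≠ 0 := by
          intro h0
          have : (s + 1).re = 0 := by rw [h0]; simp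
          simp at this
          linarith
        have hO : (fun n : ℕ => ∑ k ∈ Finset.Icc 1 n, a k) =O[atTop] fun n => (n : ℝ) ^ (1 : ℝ) := by
          refine Asymptotics.IsBigO.of_bound C ?_
          filter_upwards with n
          have := hC n (Nat.cast_nonneg n)
          rw [Nat.floor_natCast] at this
          rw [Real.norm_of_nonneg (Finset.sum_nonneg fun i _ => ha i), Real.rpow_one,
            Real.norm_of_nonneg (Nat.cast_nonneg n)]
          exact this
        have hL := LSeries_eq_mul_integral_of_nonneg a zero_le_one (s := s + 1) (by simp [hs]) hO ha
        have e1 : ∫ t in Set.Ioi (1 : ℝ), (∑ k ∈ Finset.Icc 1 ⌊t⌋₊, (a k : ℂ)) * t ^ (-(s + 1 + 1)) =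
            ∫ v in Set.Ioi (0 : ℝ), (B v : ℂ) * cexp (-s * v) := by
          have := integral_comp_exp_Ioi (fun t : ℝ => (∑ k ∈ Finset.Icc 1 ⌊t⌋₊, (a k : ℂ)) *
            (t : ℂ) ^ (-(s + 1 + 1))) 0
          rw [Real.exp_zero] at this
          rw [← this]
          congr 1; ext v
          have c1 : ((Real.exp v : ℝ) : ℂ) ^ (-(s + 1 + 1)) = cexp (v * (-(s + 1 + 1))) := by
            rw [Complex.cpow_def_of_ne_zero (by exact_mod_cast (Real.exp_pos v).ne'),
              ← Complex.ofReal_log (Real.exp_pos v).le, Real.log_exp]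
          rw [c1]
          simp only [hB, hS, real_smul]
          push_cast
          have c2 : cexp v * cexp (v * (-(s + 1 + 1))) = cexp (-v) * cexp (-s * v) := by
            rw [← Complex.exp_add, ← Complex.exp_add]; ring_nf
          linear_combination (∑ k ∈ Finset.Icc 1 ⌊Real.exp v⌋₊, (a k : ℂ)) * c2
        rw [e1] at hL
        have i0 : IntegrableOn (fun v : ℝ => cexp (-s * v)) (Set.Ioi 0) :=
          integrableOn_exp_mul_complex_Ioi (by simpa using hs) 0
        have i1 : IntegrableOn (fun v : ℝ => (B v : ℂ) * cexp (-s * v)) (Set.Ioi 0) := by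
          refine Integrable.bdd_mul (c := C) i0 ?_ ?_
          · exact (Complex.measurable_ofReal.comp hBm).aestronglyMeasurable
          · filter_upwards with v
            rw [Complex.norm_real, Real.norm_of_nonneg (hB0 v)]
            exact hBC v
        have e2 : ∫ v in Set.Ioi (0 : ℝ), ((B v - A : ℝ) : ℂ) * cexp (-s * v) =
            (∫ v in Set.Ioi (0 : ℝ), (B v : ℂ) * cexp (-s * v)) - A * ∫ v in Set.Ioi (0 : ℝ), cexp (-s * v) := by
          rw [← integral_const_mul, ← integral_sub i1 (i0.const_mul _)]
          congr 1; ext v; push_cast; ring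
        rw [e2, integral_exp_mul_complex_Ioi (by simpa using hs), hGL _ (by simp [hs]), hL]
        have : (s + 1 - 1) = s := by ring
        rw [this]
        simp only [ofReal_zero, mul_zero, Complex.exp_zero]
        field_simp
        ring
  have h2 := hlim.comp Real.tendsto_log_atTop
  refine h2.congr' ?_
  filter_upwards [eventually_gt_atTop 0] with x hx
  simp only [Function.comp, hB, Real.exp_neg, Real.exp_log hx, hS, div_eq_mul_inv]

theorem psi_residue (q : ℕ) [NeZero q] (a : ZMod q) (ha : IsUnit a) :
    Tendsto (fun x : ℝ => (∑ k ∈ Finset.Icc 1 ⌊x⌋₊, ArithmeticFunction.vonMangoldt.residueClass a k) / x)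
      atTop (nhds ((q.totient : ℝ)⁻¹)) := by
  refine wiener_ikehara _ (ArithmeticFunction.vonMangoldt.residueClass_nonneg a) (Real.log 4 + 4) ?_ _
    (ArithmeticFunction.vonMangoldt.LFunctionResidueClassAux a)
    (ArithmeticFunction.vonMangoldt.continuousOn_LFunctionResidueClassAux a) ?_
  · intro x hx
    refine le_trans ?_ (Chebyshev.psi_le_const_mul_self hx)
    rw [Chebyshev.psi, ← Finset.Icc_succ_left_eq_Ioc]
    exact Finset.sum_le_sum fun i _ => ArithmeticFunction.vonMangoldt.residueClass_le a i
  · intro s hs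
    rw [ArithmeticFunction.vonMangoldt.eqOn_LFunctionResidueClassAux ha hs]
    simp

/-- Prime number theorem in arithmetic progressions, theta form. -/
theorem theta_residue (q : ℕ) [NeZero q] (a : ZMod q) (ha : IsUnit a) :
    Tendsto (fun n : ℕ => (∑ p ∈ (Finset.range (n + 1)).filter (fun p : ℕ => p.Prime ∧ (p : ZMod q) = a), Real.log p) / n)
      atTop (nhds ((q.totient : ℝ)⁻¹)) := by
  obtain ⟨C, hC⟩ := Chebyshev.psi_sub_theta_le_mul_sqrt
  have h1 := (psi_residue q a ha).comp tendsto_natCast_atTop_atTop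
  have h2 : Tendsto (fun n : ℕ => |C| * (Real.sqrt n)⁻¹) atTop (nhds (|C| * 0)) :=
    (tendsto_inv_atTop_zero.comp (Real.tendsto_sqrt_atTop.comp tendsto_natCast_atTop_atTop)).const_mul _
  rw [mul_zero] at h2
  have h3 : Tendsto (fun n : ℕ => (∑ k ∈ Finset.Icc 1 ⌊(n : ℝ)⌋₊, ArithmeticFunction.vonMangoldt.residueClass a k) / (n : ℝ)
      - (∑ p ∈ (Finset.range (n + 1)).filter (fun p : ℕ => p.Prime ∧ (p : ZMod q) = a), Real.log p) / n) atTop (nhds 0) := by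
    have key : ∀ n : ℕ, 0 ≤ (∑ k ∈ Finset.Icc 1 n, ArithmeticFunction.vonMangoldt.residueClass a k)
      - (∑ p ∈ (Finset.range (n + 1)).filter (fun p : ℕ => p.Prime ∧ (p : ZMod q) = a), Real.log p) ∧
      (∑ k ∈ Finset.Icc 1 n, ArithmeticFunction.vonMangoldt.residueClass a k)
      - (∑ p ∈ (Finset.range (n + 1)).filter (fun p : ℕ => p.Prime ∧ (p : ZMod q) = a), Real.log p) ≤
        Chebyshev.psi n - Chebyshev.theta n := by
      intro n
      rw [Chebyshev.psi_eq_sum_Icc, Chebyshev.theta_eq_sum_Icc, Nat.floor_natCast]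
      have e0 : Finset.Icc 0 n = Finset.range (n + 1) := by ext; simp
      have e1 : ∑ k ∈ Finset.Icc 1 n, ArithmeticFunction.vonMangoldt.residueClass a k =
          ∑ k ∈ Finset.range (n + 1), ArithmeticFunction.vonMangoldt.residueClass a k := by
        apply Finset.sum_subset
        · intro k hk; simp at hk ⊢; omega
        · intro k hk hk'
          have : k = 0 := by simp at hk hk'; omega
          rw [this]; exact ArithmeticFunction.vonMangoldt.residueClass_apply_zero a
      rw [e1, e0, Finset.sum_filter, Finset.sum_filter, ← Finset.sum_sub_distrib, ← Finset.sum_sub_distrib]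
      have pt : ∀ k : ℕ, 0 ≤ ArithmeticFunction.vonMangoldt.residueClass a k -
          (if k.Prime ∧ (k : ZMod q) = a then Real.log k else 0) ∧
          ArithmeticFunction.vonMangoldt.residueClass a k -
          (if k.Prime ∧ (k : ZMod q) = a then Real.log k else 0) ≤
          ArithmeticFunction.vonMangoldt k - (if k.Prime then Real.log k else 0) := by
        intro k
        have hv : 0 ≤ ArithmeticFunction.vonMangoldt k := ArithmeticFunction.vonMangoldt_nonneg
        by_cases hk : k.Prime <;> by_cases hka : (k : ZMod q) = a <;>
          simp [ArithmeticFunction.vonMangoldt.residueClass, Set.indicator, hk, hka,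
            ArithmeticFunction.vonMangoldt_apply_prime] 
      exact ⟨Finset.sum_nonneg fun k _ => (pt k).1, Finset.sum_le_sum fun k _ => (pt k).2⟩
    refine squeeze_zero_norm' ?_ h2
    filter_upwards [eventually_gt_atTop 0] with n hn
    have hn' : (0 : ℝ) < n := by exact_mod_cast hn
    rw [Nat.floor_natCast, ← sub_div, norm_div, Real.norm_of_nonneg (key n).1, Real.norm_of_nonneg hn'.le]
    rw [div_le_iff₀ hn', mul_assoc]
    have : (Real.sqrt n)⁻¹ * n = Real.sqrt n := by
      rw [inv_mul_eq_div, Real.div_sqrt]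
    rw [this]
    refine ((key n).2.trans (hC n)).trans ?_
    gcongr
    exact le_abs_self C
  have h4 := h1.sub h3
  rw [sub_zero] at h4
  refine h4.congr fun n => ?_
  simp only [Function.comp]
  ring

end ArtinAux

namespace ArtinAux

noncomputable def wt (k p : ℕ) : ℝ := (p : ℝ) ^ k * ((p : ℝ) - 1)

noncomputable def WS (k n : ℕ) : ℝ := ∑ p ∈ (Finset.range n).filter Nat.Prime, wt k p

def HasDens (k : ℕ) (c : ℕ → ℝ) (α : ℝ) : Prop :=
  Tendsto (fun n : ℕ => (∑ p ∈ (Finset.range n).filter Nat.Prime, c p * wt k p) / WS k n) atTop (nhds α)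

lemma abel_littleO (e v : ℕ → ℝ) (hv : Monotone v) (hv0 : 0 ≤ v 0)
    (hE : Tendsto (fun n : ℕ => (∑ j ∈ Finset.range n, e j) / n) atTop (nhds 0)) (ε : ℝ) (hε : 0 < ε) :
    ∀ᶠ n : ℕ in atTop, |∑ j ∈ Finset.range n, e j * v j| ≤ ε * (n * v n) := by
  set E : ℕ → ℝ := fun n => ∑ j ∈ Finset.range n, e j with hEdef
  have habel : ∀ n, ∑ j ∈ Finset.range n, e j * v j =
      E n * v n - ∑ j ∈ Finset.range n, E (j + 1) * (v (j + 1) - v j) := by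
    intro n
    induction n with
    | zero => simp [hEdef]
    | succ n ih =>
      rw [Finset.sum_range_succ, ih, Finset.sum_range_succ]
      have : E (n + 1) = E n + e n := Finset.sum_range_succ _ _
      rw [this]; ring
  set δ := ε / 4 with hδ
  have hδ0 : 0 < δ := by positivity
  have hK : ∃ K : ℝ, 0 ≤ K ∧ ∀ n, |E n| ≤ δ * n + K := by
    have h1 := hE.abs
    rw [abs_zero] at h1
    obtain ⟨N, hN⟩ := eventually_atTop.mp (h1.eventually (gt_mem_nhds hδ0))
    refine ⟨∑ j ∈ Finset.range (N + 1), |E j|, Finset.sum_nonneg fun _ _ => abs_nonneg _, ?_⟩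
    intro n
    have hs : 0 ≤ ∑ j ∈ Finset.range (N + 1), |E j| := Finset.sum_nonneg fun _ _ => abs_nonneg _
    by_cases hn : n ≤ N
    · have := Finset.single_le_sum (f := fun j => |E j|) (fun _ _ => abs_nonneg _)
        (Finset.mem_range.mpr (Nat.lt_succ_of_le hn))
      have h3 : 0 ≤ δ * n := by positivity
      linarith
    · have hn' : (0 : ℝ) < n := by exact_mod_cast (by omega : 0 < n)
      have := hN n (by omega)
      rw [abs_div, abs_of_pos hn', div_lt_iff₀ hn'] at this
      linarith
  obtain ⟨K, hK0, hK⟩ := hK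
  have hev : ∀ᶠ n : ℕ in atTop, K ≤ δ * n :=
    (tendsto_natCast_atTop_atTop.const_mul_atTop hδ0).eventually_ge_atTop K
  filter_upwards [hev] with n hn
  have hvn : ∀ m, 0 ≤ v m := fun m => hv0.trans (hv (Nat.zero_le m))
  rw [habel]
  have b1 : |E n * v n| ≤ (δ * n + K) * v n := by
    rw [abs_mul, abs_of_nonneg (hvn n)]
    exact mul_le_mul_of_nonneg_right (hK n) (hvn n)
  have b2 : |∑ j ∈ Finset.range n, E (j + 1) * (v (j + 1) - v j)| ≤ (δ * n + K) * v n := by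
    calc _ ≤ ∑ j ∈ Finset.range n, |E (j + 1) * (v (j + 1) - v j)| := Finset.abs_sum_le_sum_abs _ _
      _ ≤ ∑ j ∈ Finset.range n, (δ * n + K) * (v (j + 1) - v j) := by
        refine Finset.sum_le_sum fun j hj => ?_
        have h0 : 0 ≤ v (j + 1) - v j := sub_nonneg.mpr (hv (Nat.le_succ j))
        rw [abs_mul, abs_of_nonneg h0]
        refine mul_le_mul_of_nonneg_right ((hK _).trans ?_) h0
        have : ((j + 1 : ℕ) : ℝ) ≤ n := by exact_mod_cast Finset.mem_range.mp hj
        gcongr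
      _ = (δ * n + K) * (v n - v 0) := by rw [← Finset.mul_sum, Finset.sum_range_sub]
      _ ≤ _ := by
        gcongr
        linarith
  have b3 : (δ * n + K) * v n ≤ 2 * δ * n * v n := by
    refine mul_le_mul_of_nonneg_right (by linarith) (hvn n)
  calc _ ≤ |E n * v n| + |∑ j ∈ Finset.range n, E (j + 1) * (v (j + 1) - v j)| := abs_sub _ _
    _ ≤ 2 * δ * n * v n + 2 * δ * n * v n := by linarith
    _ = ε * (n * v n) := by rw [hδ]; ring

lemma theta_residue' (q : ℕ) [NeZero q] (a : ZMod q) (ha : IsUnit a) :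
    Tendsto (fun n : ℕ => (∑ p ∈ (Finset.range n).filter (fun p : ℕ => p.Prime ∧ (p : ZMod q) = a),
      Real.log p) / n) atTop (nhds ((q.totient : ℝ)⁻¹)) := by
  rw [← tendsto_add_atTop_iff_nat 1]
  have h1 := theta_residue q a ha
  have h2 : Tendsto (fun n : ℕ => (n : ℝ) / (n + 1 : ℝ)) atTop (nhds 1) := tendsto_natCast_div_add_atTop 1
  have h3 := h1.mul h2
  rw [mul_one] at h3
  refine h3.congr' ?_
  filter_upwards [eventually_gt_atTop 0] with n hn
  have hn' : (n : ℝ) ≠ 0 := by exact_mod_cast hn.ne'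
  push_cast
  field_simp

lemma theta_all :
    Tendsto (fun n : ℕ => (∑ p ∈ (Finset.range n).filter Nat.Prime, Real.log p) / n) atTop (nhds 1) := by
  have := theta_residue' 1 0 (isUnit_of_subsingleton _)
  simp only [Nat.totient_one, Nat.cast_one, inv_one] at this
  refine this.congr fun n => ?_
  congr 2
  ext p
  simp [Subsingleton.elim (p : ZMod 1) 0]

lemma wt_nonneg (k p : ℕ) (hp : 1 ≤ p) : 0 ≤ wt k p := by
  have : (1 : ℝ) ≤ p := by exact_mod_cast hp
  unfold wt
  have : (0 : ℝ) ≤ p - 1 := by linarith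
  positivity

lemma wt_mono (k p n : ℕ) (hp : 1 ≤ p) (h : p ≤ n) : wt k p ≤ wt k n := by
  have h1 : (1 : ℝ) ≤ p := by exact_mod_cast hp
  have h2 : (p : ℝ) ≤ n := by exact_mod_cast h
  unfold wt
  have h3 : (0 : ℝ) ≤ p - 1 := by linarith
  gcongr

lemma WS_lower (k : ℕ) : ∃ c : ℝ, 0 < c ∧ ∀ᶠ n : ℕ in atTop, c * ((n : ℝ) ^ (k + 2) / Real.log n) ≤ WS k n := by
  refine ⟨(1 / 4) ^ (k + 2), by positivity, ?_⟩
  set T : ℕ → ℝ := fun n => ∑ p ∈ (Finset.range n).filter Nat.Prime, Real.log p with hT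
  have h1 := theta_all
  have h2 : Tendsto (fun n : ℕ => n / 2) atTop atTop := Nat.tendsto_div_const_atTop (by norm_num)
  have e1 := h1.eventually (lt_mem_nhds (show (0.9 : ℝ) < 1 by norm_num))
  have e2 := h2.eventually (h1.eventually (gt_mem_nhds (show (1 : ℝ) < 1.1 by norm_num)))
  filter_upwards [e1, e2, eventually_ge_atTop 16] with n a1 a2 hn
  have hn' : (16 : ℝ) ≤ n := by exact_mod_cast hn
  set m := n / 2 with hm
  have hm1 : (n : ℝ) ≤ 2 * m + 1 := by exact_mod_cast (by omega : n ≤ 2 * m + 1)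
  have hm2 : 2 * (m : ℝ) ≤ n := by exact_mod_cast (by omega : 2 * m ≤ n)
  have hmn : m ≤ n := by omega
  rw [lt_div_iff₀ (by linarith)] at a1
  rw [div_lt_iff₀ (by linarith)] at a2
  have hlog : 0 < Real.log n := Real.log_pos (by linarith)
  have hsub : (Finset.range m).filter Nat.Prime ⊆ (Finset.range n).filter Nat.Prime :=
    Finset.filter_subset_filter _ (Finset.range_subset_range.mpr hmn)
  have s1 := Finset.sum_sdiff hsub (f := fun p : ℕ => Real.log p)
  have s2 : ∑ p ∈ (Finset.range n).filter Nat.Prime \ (Finset.range m).filter Nat.Prime, Real.log p ≥ n / 4 := by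
    linarith
  have s3 : wt k m / Real.log n * ∑ p ∈ (Finset.range n).filter Nat.Prime \ (Finset.range m).filter Nat.Prime,
      Real.log p ≤ WS k n := by
    unfold WS
    rw [Finset.mul_sum]
    refine le_trans (Finset.sum_le_sum (g := fun p => wt k p) ?_) (Finset.sum_le_sum_of_subset_of_nonneg
      Finset.sdiff_subset ?_)
    · intro p hp
      simp only [Finset.mem_sdiff, Finset.mem_filter, Finset.mem_range] at hp
      have hpm : m ≤ p := by
        by_contra h
        exact hp.2 ⟨by omega, hp.1.2⟩
      have b1 : wt k m ≤ wt k p := wt_mono k m p (by omega) hpm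
      have b2 : Real.log p ≤ Real.log n :=
        Real.log_le_log (by exact_mod_cast hp.1.2.pos) (by exact_mod_cast hp.1.1.le)
      have b3 := wt_nonneg k m (by omega)
      have b4 : 0 ≤ Real.log p := Real.log_natCast_nonneg p
      rw [div_mul_eq_mul_div, div_le_iff₀ hlog]
      exact mul_le_mul b1 b2 b4 (b3.trans b1)
    · intro p hp _
      exact wt_nonneg k p (Finset.mem_filter.mp hp).2.one_lt.le
  refine le_trans ?_ s3
  have b5 : ((n : ℝ) / 4) ^ (k + 1) ≤ wt k m := by
    unfold wt
    rw [pow_succ]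
    have : (n : ℝ) / 4 ≤ m - 1 := by linarith
    gcongr
    linarith
  have b6 : (0 : ℝ) ≤ n / 4 := by positivity
  calc (1 / 4 : ℝ) ^ (k + 2) * ((n : ℝ) ^ (k + 2) / Real.log n) = ((n : ℝ) / 4) ^ (k + 1) / Real.log n * (n / 4) := by
        have e : (n : ℝ) ^ (k + 2) * (1 / 4) ^ (k + 2) = (n / 4) ^ (k + 1) * (n / 4) := by
          rw [← mul_pow, ← pow_succ]; congr 1; ring
        rw [div_mul_eq_mul_div, ← e]; ring
    _ ≤ _ := by
        gcongr
        exact div_nonneg (wt_nonneg k m (by omega)) hlog.le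

lemma WS_pos (k : ℕ) : ∀ᶠ n : ℕ in atTop, 0 < WS k n := by
  obtain ⟨c, hc, h⟩ := WS_lower k
  filter_upwards [h, eventually_ge_atTop 2] with n hn h2
  have : (1 : ℝ) < n := by exact_mod_cast h2
  have hl := Real.log_pos this
  refine lt_of_lt_of_le ?_ hn
  positivity

lemma WS_atTop (k : ℕ) : Tendsto (fun n => WS k n) atTop atTop := by
  obtain ⟨c, hc, h⟩ := WS_lower k
  have h1 : Tendsto (fun n : ℕ => c * (n : ℝ)) atTop atTop :=
    tendsto_natCast_atTop_atTop.const_mul_atTop hc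
  refine tendsto_atTop_mono' _ ?_ h1
  filter_upwards [h, eventually_ge_atTop 2] with n hn h2
  have h2' : (1 : ℝ) < n := by exact_mod_cast h2
  have hl := Real.log_pos h2'
  refine le_trans ?_ hn
  gcongr
  rw [le_div_iff₀ hl]
  have : Real.log n ≤ n := (Real.log_le_sub_one_of_pos (by linarith)).trans (by linarith)
  calc (n : ℝ) * Real.log n ≤ n * n := by gcongr
    _ = (n : ℝ) ^ 2 := by ring
    _ ≤ (n : ℝ) ^ (k + 2) := pow_le_pow_right₀ h2'.le (by omega)

lemma vfun_mono (k : ℕ) : Monotone fun j : ℕ => wt k j / Real.log j := by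
  apply monotone_nat_of_le_succ
  intro j
  rcases Nat.lt_or_ge j 2 with h | h
  · have : j = 0 ∨ j = 1 := by omega
    have hR : 0 ≤ wt k (j + 1) / Real.log ((j + 1 : ℕ) : ℝ) :=
      div_nonneg (wt_nonneg k _ (by omega)) (Real.log_natCast_nonneg _)
    refine le_trans (le_of_eq ?_) hR
    rcases this with rfl | rfl <;> simp [wt]
  · have hj : (2 : ℝ) ≤ j := by exact_mod_cast h
    have hl : 0 < Real.log j := Real.log_pos (by linarith)
    have hl2 : 0 < Real.log (j + 1) := Real.log_pos (by linarith)
    unfold wt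
    push_cast
    have key : ((j : ℝ) - 1) / Real.log j ≤ (j + 1 - 1 : ℝ) / Real.log (j + 1) := by
      rw [div_le_div_iff₀ hl hl2, add_sub_cancel_right]
      have k1 : Real.log (j + 1) ≤ Real.log j + 1 / j := by
        have : (j : ℝ) + 1 = j * (1 + 1 / j) := by field_simp
        rw [this, Real.log_mul (by linarith) (by positivity)]
        have := Real.log_le_sub_one_of_pos (show (0 : ℝ) < 1 + 1 / j by positivity)
        linarith
      have k2 := Real.one_sub_inv_le_log_of_pos (show (0 : ℝ) < j by linarith)
      calc ((j : ℝ) - 1) * Real.log (j + 1) ≤ (j - 1) * (Real.log j + 1 / j) := by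
            have : (0 : ℝ) ≤ j - 1 := by linarith
            gcongr
        _ = (j - 1) * Real.log j + (1 - (j : ℝ)⁻¹) := by field_simp
        _ ≤ (j - 1) * Real.log j + Real.log j := by linarith
        _ = _ := by ring
    rw [mul_div_assoc, mul_div_assoc]
    have h0 : 0 ≤ ((j : ℝ) - 1) / Real.log j := div_nonneg (by linarith) hl.le
    gcongr
    linarith

lemma dens_residue (k q : ℕ) [NeZero q] (a : ZMod q) (ha : IsUnit a) :
    HasDens k (fun p => if (p : ZMod q) = a then 1 else 0) ((q.totient : ℝ)⁻¹) := by
  obtain ⟨c, hc, hW⟩ := WS_lower k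
  set β := (q.totient : ℝ)⁻¹ with hβ
  set e : ℕ → ℝ := fun j => if j.Prime then ((if (j : ZMod q) = a then 1 else 0) - β) * Real.log j else 0 with he
  have hE : Tendsto (fun n : ℕ => (∑ j ∈ Finset.range n, e j) / n) atTop (nhds 0) := by
    have h1 := (theta_residue' q a ha).sub (theta_all.const_mul β)
    rw [mul_one, sub_self] at h1
    refine h1.congr fun n => ?_
    rw [← mul_div_assoc, ← sub_div, Finset.mul_sum, Finset.sum_filter, Finset.sum_filter,
      ← Finset.sum_sub_distrib]
    congr 1
    refine Finset.sum_congr rfl fun j _ => ?_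
    simp only [he]
    by_cases h1 : j.Prime <;> by_cases h2 : (j : ZMod q) = a <;> simp [h1, h2] <;> ring
  have hv := vfun_mono k
  have key : Tendsto (fun n : ℕ => (∑ j ∈ Finset.range n, e j * (wt k j / Real.log j)) / WS k n) atTop (nhds 0) := by
    rw [Metric.tendsto_nhds]
    intro ε hε
    have h1 := abel_littleO e _ hv (by simp) hE (ε / 2 * c) (by positivity)
    filter_upwards [h1, hW, WS_pos k, eventually_ge_atTop 2] with n a1 a2 a3 a4
    rw [Real.dist_eq, sub_zero, abs_div, abs_of_pos a3, div_lt_iff₀ a3]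
    have hn : (1 : ℝ) < n := by exact_mod_cast a4
    have hl := Real.log_pos hn
    have b1 : n * (wt k n / Real.log n) ≤ (n : ℝ) ^ (k + 2) / Real.log n := by
      rw [← mul_div_assoc]
      gcongr
      unfold wt
      calc (n : ℝ) * (n ^ k * (n - 1)) ≤ n * (n ^ k * n) := by gcongr; linarith
        _ = _ := by ring
    calc _ ≤ ε / 2 * c * (n * (wt k n / Real.log n)) := a1
      _ ≤ ε / 2 * c * ((n : ℝ) ^ (k + 2) / Real.log n) := by gcongr
      _ = ε / 2 * (c * ((n : ℝ) ^ (k + 2) / Real.log n)) := by ring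
      _ ≤ ε / 2 * WS k n := by gcongr
      _ < ε * WS k n := by
        have := mul_pos hε a3
        linarith
  have h2 := key.add_const β
  rw [zero_add] at h2
  refine h2.congr' ?_
  filter_upwards [WS_pos k] with n hn
  rw [eq_div_iff hn.ne', add_mul, div_mul_cancel₀ _ hn.ne', WS, Finset.mul_sum, Finset.sum_filter,
    Finset.sum_filter, ← Finset.sum_add_distrib]
  refine Finset.sum_congr rfl fun j _ => ?_
  simp only [he]
  by_cases h1 : j.Prime
  · have hl : Real.log j ≠ 0 := (Real.log_pos (by exact_mod_cast h1.one_lt)).ne'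
    simp only [h1, if_true]
    field_simp
    ring
  · simp [h1]

end ArtinAux

namespace ArtinAux

lemma exists_fact_split (q N : ℕ) (hq : q.Prime) :
    ∃ e m : ℕ, N.factorial = q ^ e * m ∧ ¬ q ∣ m ∧ e ≤ N := by
  haveI := Fact.mk hq
  obtain ⟨e, m, hm, he⟩ := Nat.exists_eq_pow_mul_and_not_dvd (Nat.factorial_ne_zero N) q hq.ne_one
  refine ⟨e, m, he, hm, ?_⟩
  have h1 : padicValNat q N.factorial = e := by
    rw [he, padicValNat.mul (pow_ne_zero _ hq.ne_zero) (by rintro rfl; simp at hm),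
      padicValNat.prime_pow, padicValNat.eq_zero_of_not_dvd hm, add_zero]
  have h2 := sub_one_mul_padicValNat_factorial (p := q) N
  rw [h1] at h2
  have h3 : 1 ≤ q - 1 := by have := hq.two_le; omega
  calc e = 1 * e := (one_mul e).symm
    _ ≤ (q - 1) * e := Nat.mul_le_mul_right e h3
    _ = _ := h2
    _ ≤ N := Nat.sub_le _ _

lemma dvd_prod_ap (q N m : ℕ) (hm : m ∣ N.factorial) (hc : Nat.Coprime q m) :
    m ∣ ∏ j ∈ Finset.range N, (q * (j + 1) + 1) := by
  have hm0 : m ≠ 0 := by rintro rfl; exact Nat.factorial_ne_zero N (zero_dvd_iff.mp hm)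
  haveI : NeZero m := ⟨hm0⟩
  set r : ℕ := ((q : ZMod m)⁻¹).val with hr
  have hqr : (q : ZMod m) * (r : ZMod m) = 1 := by
    rw [hr, ZMod.natCast_zmod_val]
    exact ZMod.coe_mul_inv_eq_one q hc
  rw [← ZMod.natCast_eq_zero_iff]
  have e1 : ((∏ j ∈ Finset.range N, (q * (j + 1) + 1) : ℕ) : ZMod m)
      = ((q ^ N * (r + 1).ascFactorial N : ℕ) : ZMod m) := by
    rw [Nat.ascFactorial_eq_prod_range]
    push_cast
    rw [← Finset.card_range N, ← Finset.prod_const, Finset.card_range, ← Finset.prod_mul_distrib]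
    refine Finset.prod_congr rfl fun j _ => ?_
    rw [← hqr]; ring
  rw [e1, ZMod.natCast_eq_zero_iff]
  exact Dvd.dvd.mul_left (hm.trans (Nat.factorial_dvd_ascFactorial _ _)) _

lemma cheb_ap (q N : ℕ) (hq : q.Prime) :
    ∑ p ∈ (Finset.Ioc N (q * N + 1)).filter (fun p : ℕ => p.Prime ∧ q ∣ p - 1), Real.log p
      ≤ 2 * N * Real.log (q + 1) := by
  obtain ⟨e, m, hf, hqm, heN⟩ := exists_fact_split q N hq
  have hmd : m ∣ N.factorial := ⟨q ^ e, by rw [hf]; ring⟩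
  have hX := dvd_prod_ap q N m hmd ((Nat.Prime.coprime_iff_not_dvd hq).mpr hqm)
  set X := ∏ j ∈ Finset.range N, (q * (j + 1) + 1) with hXdef
  set S := (Finset.Ioc N (q * N + 1)).filter (fun p : ℕ => p.Prime ∧ q ∣ p - 1) with hS
  have hXpos : 0 < X := Finset.prod_pos fun _ _ => Nat.succ_pos _
  have hP : ∏ p ∈ S, p ∣ X := by
    refine Finset.prod_primes_dvd X (fun p hp => ((Finset.mem_filter.mp hp).2.1).prime) ?_
    intro p hp
    obtain ⟨h1, h2, j, hj⟩ := Finset.mem_filter.mp hp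
    rw [Finset.mem_Ioc] at h1
    have hp2 := h2.two_le
    have hj0 : j ≠ 0 := by rintro rfl; omega
    have hjN : j ≤ N := by
      have : q * j ≤ q * N := by omega
      exact Nat.le_of_mul_le_mul_left this hq.pos
    have : p = q * (j - 1 + 1) + 1 := by
      rw [Nat.sub_add_cancel (by omega)]; omega
    rw [this]
    exact Finset.dvd_prod_of_mem (fun j => q * (j + 1) + 1) (Finset.mem_range.mpr (by omega))
  have hco : Nat.Coprime (∏ p ∈ S, p) m := by
    refine Nat.Coprime.prod_left fun p hp => ?_
    obtain ⟨h1, h2, -⟩ := Finset.mem_filter.mp hp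
    rw [Finset.mem_Ioc] at h1
    rw [Nat.Prime.coprime_iff_not_dvd h2]
    intro hd
    have := (h2.dvd_factorial).mp (hd.trans hmd)
    omega
  have hPm := Nat.le_of_dvd hXpos (hco.mul_dvd_of_dvd_of_dvd hP hX)
  have hXle : X ≤ (q + 1) ^ N * N.factorial := by
    rw [hXdef, ← Finset.prod_range_add_one_eq_factorial, ← Finset.card_range N, ← Finset.prod_const,
      Finset.card_range, ← Finset.prod_mul_distrib]
    refine Finset.prod_le_prod' fun j _ => ?_
    nlinarith
  have hm0 : 0 < m := Nat.pos_of_ne_zero (by rintro rfl; simp at hqm)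
  have hPle : ∏ p ∈ S, p ≤ (q + 1) ^ (2 * N) := by
    have h1 : (∏ p ∈ S, p) * m ≤ ((q + 1) ^ N * q ^ e) * m := by
      calc _ ≤ _ := hPm
        _ ≤ _ := hXle
        _ = _ := by rw [hf]; ring
    have h2 := Nat.le_of_mul_le_mul_right h1 hm0
    calc _ ≤ _ := h2
      _ ≤ (q + 1) ^ N * (q + 1) ^ N := by
        refine Nat.mul_le_mul_left _ ?_
        calc q ^ e ≤ (q + 1) ^ e := Nat.pow_le_pow_left (by omega) e
          _ ≤ _ := Nat.pow_le_pow_right (by omega) heN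
      _ = _ := by rw [two_mul, pow_add]
  have hlog : ∑ p ∈ S, Real.log p = Real.log ((∏ p ∈ S, p : ℕ) : ℝ) := by
    rw [Nat.cast_prod, Real.log_prod]
    intro p hp
    exact_mod_cast (Finset.mem_filter.mp hp).2.1.ne_zero
  rw [hlog]
  have hPpos : 0 < ∏ p ∈ S, p := Finset.prod_pos fun p hp => (Finset.mem_filter.mp hp).2.1.pos
  calc Real.log ((∏ p ∈ S, p : ℕ) : ℝ) ≤ Real.log (((q + 1) ^ (2 * N) : ℕ) : ℝ) :=
        Real.log_le_log (by exact_mod_cast hPpos) (by exact_mod_cast hPle)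
    _ = _ := by push_cast; rw [Real.log_pow]; push_cast; ring

noncomputable def cnt (n q : ℕ) : ℝ := ((Finset.range n).filter (fun p : ℕ => p.Prime ∧ q ∣ p - 1)).card


end ArtinAux

namespace ArtinAux

lemma cnt_triv (n q : ℕ) (hq : 0 < q) : cnt n q ≤ n / q := by
  unfold cnt
  have h : ((Finset.range n).filter (fun p : ℕ => p.Prime ∧ q ∣ p - 1)).card ≤ n / q := by
    have e : (Finset.Ioc 0 (n / q)).card = n / q := by simp
    rw [← e]
    refine Finset.card_le_card_of_injOn (fun p => (p - 1) / q) ?_ ?_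
    · intro p hp
      rw [Finset.mem_coe, Finset.mem_filter, Finset.mem_range] at hp
      obtain ⟨h1, h2, h3⟩ := hp
      have h4 := h2.two_le
      rw [Finset.mem_coe, Finset.mem_Ioc]
      exact ⟨Nat.div_pos (Nat.le_of_dvd (by omega) h3) hq, Nat.div_le_div_right (by omega)⟩
    · intro p hp p' hp' he
      rw [Finset.mem_coe, Finset.mem_filter, Finset.mem_range] at hp hp'
      have h4 := hp.2.1.two_le
      have h4' := hp'.2.1.two_le
      have := (Nat.div_left_inj hp.2.2 hp'.2.2).mp he
      omega
  calc _ ≤ ((n / q : ℕ) : ℝ) := by exact_mod_cast h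
    _ ≤ _ := Nat.cast_div_le

lemma log_succ_le (q : ℕ) : Real.log (q + 1) ≤ 2 * Real.sqrt q := by
  have h0 : (0 : ℝ) ≤ q := Nat.cast_nonneg q
  have h1 : Real.log (q + 1) = 2 * Real.log (Real.sqrt (q + 1)) := by
    rw [Real.log_sqrt (by positivity)]; ring
  have h2 := Real.log_le_sub_one_of_pos (Real.sqrt_pos.mpr (by positivity : (0 : ℝ) < q + 1))
  have h3 : Real.sqrt (q + 1) ≤ Real.sqrt q + 1 := by
    rw [Real.sqrt_le_left (by positivity)]
    nlinarith [Real.sq_sqrt h0, Real.sqrt_nonneg (q : ℝ)]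
  linarith

lemma cnt_split (n q : ℕ) (hq : q.Prime) :
    cnt n q ≤ (Nat.primeCounting (n / q) : ℝ)
      + ((Finset.Ioc (n / q) (q * (n / q) + 1)).filter (fun p : ℕ => p.Prime ∧ q ∣ p - 1)).card := by
  unfold cnt
  rw [← Nat.primesLE_card_eq_primeCounting]
  norm_cast
  refine le_trans (Finset.card_le_card ?_) (Finset.card_union_le _ _)
  intro p hp
  obtain ⟨h1, h2, h3⟩ := Finset.mem_filter.mp hp
  rw [Finset.mem_range] at h1
  rw [Finset.mem_union]
  by_cases h : p ≤ n / q
  · left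
    rw [Nat.primesLE, Nat.mem_primesBelow]
    exact ⟨by omega, h2⟩
  · right
    rw [Finset.mem_filter, Finset.mem_Ioc]
    refine ⟨⟨by omega, ?_⟩, h2, h3⟩
    obtain ⟨j, hj⟩ := h3
    have : j ≤ n / q := by
      rw [Nat.le_div_iff_mul_le hq.pos, mul_comm]; omega
    have := Nat.mul_le_mul_left q this
    omega

lemma cnt_bound : ∀ᶠ n : ℕ in atTop, ∀ q : ℕ, q.Prime →
    cnt n q ≤ 14 * ((n : ℝ) / Real.log n) / Real.sqrt q := by
  have hlog4 : Real.log 4 ≤ 2 := by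
    rw [show (4 : ℝ) = 2 ^ 2 by norm_num, Real.log_pow]
    have := Real.log_two_lt_d9
    push_cast; linarith
  obtain ⟨X0, hX0⟩ := eventually_atTop.mp (Chebyshev.eventually_primeCounting_le (ε := 1) one_pos)
  have hlo := (Real.isLittleO_pow_log_id_atTop (n := 4)).bound (show (0 : ℝ) < 1 / 16 by norm_num)
  have hlo' := tendsto_natCast_atTop_atTop (R := ℝ) |>.eventually hlo
  have hX : ∀ᶠ n : ℕ in atTop, (max X0 2) ^ 2 ≤ (n : ℝ) :=
    tendsto_natCast_atTop_atTop (R := ℝ) |>.eventually (eventually_ge_atTop _)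
  filter_upwards [hlo', hX, eventually_ge_atTop 3] with n h1 h2 h3 q hq
  have hn0 : (0 : ℝ) < n := by exact_mod_cast (by omega : 0 < n)
  have hq0 : (0 : ℝ) < q := by exact_mod_cast hq.pos
  have hsq : 0 < Real.sqrt q := Real.sqrt_pos.mpr hq0
  have hss : Real.sqrt q * Real.sqrt q = q := Real.mul_self_sqrt hq0.le
  have hL : 0 < Real.log n := Real.log_pos (by exact_mod_cast (by omega : 1 < n))
  have hsn : Real.sqrt n * Real.sqrt n = n := Real.mul_self_sqrt hn0.le
  have hsn2 : max X0 2 ≤ Real.sqrt n := Real.le_sqrt_of_sq_le h2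
  have hsn2' : 2 ≤ Real.sqrt n := (le_max_right _ _).trans hsn2
  by_cases hqL : (q : ℝ) ≤ Real.log n ^ 2
  · have h4 : Real.log n ^ 2 ≤ Real.sqrt n / 4 := by
      simp only [id, Real.norm_eq_abs] at h1
      rw [abs_of_pos hn0, abs_of_nonneg (by positivity)] at h1
      refine abs_le_of_sq_le_sq' ?_ (by positivity) |>.2
      nlinarith
    set N := n / q with hN
    have h5 : (n : ℝ) < q * (N + 1) := by
      have := Nat.lt_mul_div_succ n hq.pos
      exact_mod_cast this
    have h6 : Real.sqrt n ≤ N := by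
      by_contra hcon
      push Not at hcon
      have : (q : ℝ) * (N + 1) ≤ Real.sqrt n / 4 * (Real.sqrt n + 1) := by
        have : (q : ℝ) ≤ Real.sqrt n / 4 := hqL.trans h4
        gcongr
      nlinarith
    have hNpos : (0 : ℝ) < N := by linarith
    have hlogN : Real.log n / 2 ≤ Real.log N := by
      rw [← Real.log_sqrt hn0.le]
      exact Real.log_le_log (by linarith) h6
    have hlN : 0 < Real.log N := by linarith
    have hpi := hX0 N (((le_max_left _ _).trans hsn2).trans h6)
    rw [Nat.floor_natCast] at hpi
    have hs1 : 1 ≤ Real.sqrt q := Real.one_le_sqrt.mpr (by exact_mod_cast hq.one_lt.le)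
    have hpi2 : (Nat.primeCounting N : ℝ) ≤ 3 * N * Real.sqrt q / Real.log N := by
      refine hpi.trans (div_le_div_of_nonneg_right ?_ hlN.le)
      calc (Real.log 4 + 1) * N ≤ 3 * N * 1 := by rw [mul_one]; gcongr; linarith
        _ ≤ _ := by gcongr
    have hch := cheb_ap q N hq
    have hS : (((Finset.Ioc N (q * N + 1)).filter (fun p : ℕ => p.Prime ∧ q ∣ p - 1)).card : ℝ)
        ≤ 4 * N * Real.sqrt q / Real.log N := by
      rw [le_div_iff₀ hlN]
      calc _ = ∑ p ∈ (Finset.Ioc N (q * N + 1)).filter (fun p : ℕ => p.Prime ∧ q ∣ p - 1), Real.log N := by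
            rw [Finset.sum_const, nsmul_eq_mul]
        _ ≤ _ := by
            refine Finset.sum_le_sum fun p hp => ?_
            rw [Finset.mem_filter, Finset.mem_Ioc] at hp
            exact Real.log_le_log hNpos (by exact_mod_cast hp.1.1.le)
        _ ≤ _ := hch
        _ ≤ 2 * N * (2 * Real.sqrt q) := by gcongr; exact log_succ_le q
        _ = _ := by ring
    have hNle : (N : ℝ) ≤ n / q := Nat.cast_div_le
    calc cnt n q ≤ _ := cnt_split n q hq
      _ ≤ 3 * N * Real.sqrt q / Real.log N + 4 * N * Real.sqrt q / Real.log N := add_le_add hpi2 hS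
      _ = 7 * N * Real.sqrt q / Real.log N := by ring
      _ ≤ 7 * (n / q) * Real.sqrt q / (Real.log n / 2) := by gcongr
      _ = 14 * ((n : ℝ) / Real.log n) / Real.sqrt q := by
        rw [← hss]; field_simp; norm_num; ring
  · push Not at hqL
    have h7 : Real.log n ≤ Real.sqrt q := Real.le_sqrt_of_sq_le hqL.le
    calc cnt n q ≤ n / q := cnt_triv n q hq.pos
      _ = (n / Real.sqrt q) / Real.sqrt q := by rw [div_div, hss]
      _ ≤ (n / Real.log n) / Real.sqrt q := by gcongr
      _ ≤ 14 * ((n : ℝ) / Real.log n) / Real.sqrt q := by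
        gcongr
        have : 0 ≤ (n : ℝ) / Real.log n := by positivity
        linarith

lemma tail_bound (k : ℕ) (ε : ℝ) (hε : 0 < ε) : ∃ z₀ : ℕ, ∀ z ≥ z₀, ∀ᶠ n : ℕ in atTop,
    ∑ p ∈ (Finset.range n).filter Nat.Prime,
      (∑ q ∈ (p - 1).primeFactors.filter (fun q => z ≤ q), (1 : ℝ) / q) * wt k p ≤ ε * WS k n := by
  obtain ⟨c, hc, hW⟩ := WS_lower k
  have hsum : Summable fun q : ℕ => (1 : ℝ) / (q : ℝ) ^ (3 / 2 : ℝ) :=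
    Real.summable_one_div_nat_rpow.mpr (by norm_num)
  obtain ⟨s, hs⟩ := summable_iff_vanishing_norm.mp hsum (ε * c / 14) (by positivity)
  obtain ⟨z₀, hz₀⟩ := s.exists_nat_subset_range
  refine ⟨z₀, fun z hz => ?_⟩
  filter_upwards [hW, cnt_bound, eventually_ge_atTop 2] with n hWn hcn hn
  have hn0 : (0 : ℝ) < n := by exact_mod_cast (by omega : 0 < n)
  have hL : 0 < Real.log n := Real.log_pos (by exact_mod_cast (by omega : 1 < n))
  set T := (Finset.Ico z n).filter Nat.Prime with hT
  have hT1 : ∑ q ∈ T, (1 : ℝ) / (q : ℝ) ^ (3 / 2 : ℝ) ≤ ε * c / 14 := by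
    have := hs T (by
      rw [Finset.disjoint_left]
      intro q hq hqs
      have := Finset.mem_range.mp (hz₀ hqs)
      rw [hT, Finset.mem_filter, Finset.mem_Ico] at hq
      omega)
    exact (le_abs_self _).trans this.le
  have step1 : ∑ p ∈ (Finset.range n).filter Nat.Prime,
      (∑ q ∈ (p - 1).primeFactors.filter (fun q => z ≤ q), (1 : ℝ) / q) * wt k p
      ≤ ∑ p ∈ (Finset.range n).filter Nat.Prime,
        ∑ q ∈ T, (if q ∣ p - 1 then (1 : ℝ) / q * (n : ℝ) ^ (k + 1) else 0) := by
    refine Finset.sum_le_sum fun p hp => ?_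
    rw [Finset.mem_filter, Finset.mem_range] at hp
    have hp2 := hp.2.two_le
    have hwt : wt k p ≤ (n : ℝ) ^ (k + 1) := by
      unfold wt
      rw [pow_succ]
      have : (p : ℝ) ≤ n := by exact_mod_cast hp.1.le
      have h1 : (1 : ℝ) ≤ p := by exact_mod_cast hp.2.one_lt.le
      gcongr
      · linarith
    have hsub : (p - 1).primeFactors.filter (fun q => z ≤ q) = T.filter (fun q => q ∣ p - 1) := by
      ext q
      simp only [hT, Finset.mem_filter, Nat.mem_primeFactors, Finset.mem_Ico]
      constructor
      · rintro ⟨⟨a, b, c⟩, d⟩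
        have := Nat.le_of_dvd (by omega) b
        exact ⟨⟨⟨d, by omega⟩, a⟩, b⟩
      · rintro ⟨⟨⟨d, e⟩, a⟩, b⟩
        exact ⟨⟨a, b, by omega⟩, d⟩
    rw [hsub, ← Finset.sum_filter, ← Finset.sum_mul]
    gcongr
  refine step1.trans ?_
  rw [Finset.sum_comm]
  have step2 : ∀ q ∈ T, ∑ p ∈ (Finset.range n).filter Nat.Prime,
      (if q ∣ p - 1 then (1 : ℝ) / q * (n : ℝ) ^ (k + 1) else 0)
      ≤ (1 : ℝ) / (q : ℝ) ^ (3 / 2 : ℝ) * (14 * ((n : ℝ) ^ (k + 2) / Real.log n)) := by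
    intro q hq
    rw [hT, Finset.mem_filter] at hq
    have hq0 : (0 : ℝ) < q := by exact_mod_cast hq.2.pos
    rw [← Finset.sum_filter, Finset.filter_filter, Finset.sum_const, nsmul_eq_mul]
    have e := hcn q hq.2
    unfold cnt at e
    have e32 : (q : ℝ) ^ (3 / 2 : ℝ) = q * Real.sqrt q := by
      rw [Real.sqrt_eq_rpow, show (3 / 2 : ℝ) = 1 + 1 / 2 by norm_num, Real.rpow_add hq0, Real.rpow_one]
    calc _ ≤ (14 * ((n : ℝ) / Real.log n) / Real.sqrt q) * ((1 : ℝ) / q * (n : ℝ) ^ (k + 1)) := by gcongr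
      _ = _ := by
        rw [e32, pow_succ (n : ℝ) (k + 1)]
        have := (Real.sqrt_pos.mpr hq0).ne'
        field_simp
  refine (Finset.sum_le_sum step2).trans ?_
  rw [← Finset.sum_mul]
  have hpos : 0 ≤ (n : ℝ) ^ (k + 2) / Real.log n := by positivity
  calc _ ≤ (ε * c / 14) * (14 * ((n : ℝ) ^ (k + 2) / Real.log n)) := by gcongr
    _ = ε * (c * ((n : ℝ) ^ (k + 2) / Real.log n)) := by ring
    _ ≤ _ := by gcongr

end ArtinAux

namespace ArtinAux

lemma HasDens.add {k : ℕ} {c c' : ℕ → ℝ} {α β : ℝ} (h : HasDens k c α) (h' : HasDens k c' β) :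
    HasDens k (fun p => c p + c' p) (α + β) := by
  unfold HasDens at *
  refine (Tendsto.add h h').congr fun n => ?_
  simp only [add_mul, Finset.sum_add_distrib, add_div]

lemma HasDens.const_mul {k : ℕ} {c : ℕ → ℝ} {α : ℝ} (h : HasDens k c α) (a : ℝ) :
    HasDens k (fun p => a * c p) (a * α) := by
  unfold HasDens at *
  refine (Tendsto.const_mul a h).congr fun n => ?_
  simp only [mul_assoc, ← Finset.mul_sum, mul_div_assoc]

lemma HasDens.sub {k : ℕ} {c c' : ℕ → ℝ} {α β : ℝ} (h : HasDens k c α) (h' : HasDens k c' β) :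
    HasDens k (fun p => c p - c' p) (α - β) := by
  unfold HasDens at *
  refine (Tendsto.sub h h').congr fun n => ?_
  simp only [sub_mul, Finset.sum_sub_distrib, sub_div]

lemma HasDens.zero (k : ℕ) : HasDens k (fun _ => 0) 0 := by
  unfold HasDens
  simp

lemma HasDens.sum {ι : Type*} {k : ℕ} (s : Finset ι) {c : ι → ℕ → ℝ} {α : ι → ℝ}
    (h : ∀ i ∈ s, HasDens k (c i) (α i)) :
    HasDens k (fun p => ∑ i ∈ s, c i p) (∑ i ∈ s, α i) := by
  classical
  induction s using Finset.induction_on with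
  | empty => simpa using HasDens.zero k
  | insert i s hi ih =>
    simp only [Finset.sum_insert hi]
    exact (h i (Finset.mem_insert_self _ _)).add (ih fun j hj => h j (Finset.mem_insert_of_mem hj))

lemma HasDens.congr {k : ℕ} {c c' : ℕ → ℝ} {α : ℝ} (h : HasDens k c α) (B : ℕ)
    (hc : ∀ p : ℕ, p.Prime → B < p → c p = c' p) : HasDens k c' α := by
  have hz : HasDens k (fun p => c' p - c p) 0 := by
    unfold HasDens
    set K := ∑ p ∈ (Finset.range (B + 1)).filter Nat.Prime, (c' p - c p) * wt k p with hK
    have h1 : Tendsto (fun n => K / WS k n) atTop (nhds 0) :=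
      Tendsto.div_atTop tendsto_const_nhds (WS_atTop k)
    refine h1.congr' ?_
    filter_upwards [eventually_ge_atTop (B + 1)] with n hn
    congr 1
    refine Finset.sum_subset ?_ ?_
    · intro p hp
      rw [Finset.mem_filter, Finset.mem_range] at *
      exact ⟨by omega, hp.2⟩
    · intro p hp hp'
      rw [Finset.mem_filter, Finset.mem_range] at *
      have : B < p := by
        by_contra hcon
        exact hp' ⟨by omega, hp.2⟩
      rw [hc p hp.2 this]; ring
  have := h.add hz
  simpa using this

lemma dens_zmod (k M : ℕ) [NeZero M] (F : ZMod M → ℝ) :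
    HasDens k (fun p => F p) (∑ u : (ZMod M)ˣ, F u * (M.totient : ℝ)⁻¹) := by
  have h := HasDens.sum (k := k) (Finset.univ : Finset (ZMod M)ˣ)
    (fun u _ => (dens_residue k M (u : ZMod M) u.isUnit).const_mul (F u))
  refine h.congr M fun p hp hMp => ?_
  have hcop : Nat.Coprime p M := by
    rw [Nat.Prime.coprime_iff_not_dvd hp]
    intro hd
    exact absurd (Nat.le_of_dvd (Nat.pos_of_ne_zero (NeZero.ne M)) hd) (by omega)
  rw [Finset.sum_eq_single (ZMod.unitOfCoprime p hcop)]
  · simp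
  · intro b _ hb
    have : (p : ZMod M) ≠ b := by
      intro he
      apply hb
      ext
      simp [he]
    simp [this]
  · simp

lemma dens_zmod_zero (k M : ℕ) [NeZero M] (F : ZMod M → ℝ) (u₀ : (ZMod M)ˣ)
    (hF : ∀ u : (ZMod M)ˣ, F ((u₀ * u : (ZMod M)ˣ) : ZMod M) = - F u) :
    HasDens k (fun p => F p) 0 := by
  have h := dens_zmod k M F
  have e : ∑ u : (ZMod M)ˣ, F u * (M.totient : ℝ)⁻¹ = 0 := by
    have h1 : ∑ u : (ZMod M)ˣ, F u * (M.totient : ℝ)⁻¹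
        = ∑ u : (ZMod M)ˣ, F ((u₀ * u : (ZMod M)ˣ) : ZMod M) * (M.totient : ℝ)⁻¹ :=
      (Equiv.sum_comp (Equiv.mulLeft u₀) (fun u : (ZMod M)ˣ => F u * (M.totient : ℝ)⁻¹)).symm
    simp only [hF, neg_mul, Finset.sum_neg_distrib] at h1
    linarith
  rwa [e] at h

lemma natCast_eq_one_iff (n p : ℕ) (hp : 1 ≤ p) : ((p : ZMod n) = 1) ↔ n ∣ p - 1 := by
  rw [← ZMod.natCast_eq_zero_iff, Nat.cast_sub hp, sub_eq_zero, Nat.cast_one]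

lemma dens_dvd (k n : ℕ) [NeZero n] :
    HasDens k (fun p => if n ∣ p - 1 then 1 else 0) (n.totient : ℝ)⁻¹ := by
  refine (dens_residue k n 1 isUnit_one).congr 0 fun p hp _ => ?_
  simp only [natCast_eq_one_iff n p hp.one_lt.le]

lemma jac_mod (a : ℤ) (M b : ℕ) (hb : Odd b) (hM : 4 * a.natAbs ∣ M) (hM2 : Even M) :
    jacobiSym a (b % M) = jacobiSym a b := by
  have h1 : Odd (b % M) := by
    rw [Nat.odd_iff] at *
    rw [Nat.mod_mod_of_dvd b hM2.two_dvd, hb]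
  rw [jacobiSym.mod_right a h1, Nat.mod_mod_of_dvd b hM, ← jacobiSym.mod_right a hb]

lemma dens_jac_zero (k n : ℕ) (hn : n ≠ 0) (a : ℤ) (ha : a ≠ 0) (u : ℕ)
    (huc : Nat.Coprime u (4 * a.natAbs * n)) (hu1 : (u : ZMod n) = 1) (huJ : jacobiSym a u = -1) :
    HasDens k (fun p => (jacobiSym a p : ℝ) * (if n ∣ p - 1 then 1 else 0)) 0 := by
  set M := 4 * a.natAbs * n with hM
  have hM0 : M ≠ 0 := by simp [hM, ha, hn]
  haveI : NeZero M := ⟨hM0⟩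
  have hMd : 4 * a.natAbs ∣ M := Dvd.intro _ rfl
  have hnM : n ∣ M := Dvd.intro_left _ rfl
  have hM2 : Even M := by
    rw [even_iff_two_dvd, hM]
    exact Dvd.dvd.mul_right (Dvd.dvd.mul_right (by norm_num) _) _
  let F : ZMod M → ℝ := fun x => (jacobiSym a x.val : ℝ) * (if (x.val : ZMod n) = 1 then 1 else 0)
  have hodd : ∀ b : ℕ, Nat.Coprime b M → Odd b := by
    intro b hb
    have := Nat.Coprime.coprime_dvd_right hM2.two_dvd hb
    exact Nat.coprime_two_right.mp this
  have hu_odd := hodd u huc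
  have h := dens_zmod_zero k M F (ZMod.unitOfCoprime u huc) (by
    intro x
    have hxc : Nat.Coprime (x : ZMod M).val M := ZMod.val_coe_unit_coprime x
    have hx_odd := hodd _ hxc
    have hv : ((ZMod.unitOfCoprime u huc * x : (ZMod M)ˣ) : ZMod M).val = (u * (x : ZMod M).val) % M := by
      rw [← ZMod.val_natCast, Nat.cast_mul, ZMod.natCast_zmod_val, Units.val_mul,
        ZMod.coe_unitOfCoprime]
    simp only [F]
    rw [hv, jac_mod a M _ (hu_odd.mul hx_odd) hMd hM2]
    haveI : NeZero u := ⟨hu_odd.pos.ne'⟩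
    haveI : NeZero (x : ZMod M).val := ⟨hx_odd.pos.ne'⟩
    rw [jacobiSym.mul_right, huJ]
    have : ((u * (x : ZMod M).val % M : ℕ) : ZMod n) = (((x : ZMod M).val : ℕ) : ZMod n) := by
      have e : ((u * (x : ZMod M).val % M : ℕ) : ZMod n) = ((u * (x : ZMod M).val : ℕ) : ZMod n) := by
        rw [ZMod.natCast_eq_natCast_iff]
        exact (Nat.mod_modEq _ M).of_dvd hnM
      rw [e, Nat.cast_mul, hu1, one_mul]
    rw [this]
    push_cast; ring)
  refine h.congr 2 fun p hp hp2 => ?_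
  have hp_odd : Odd p := hp.odd_of_ne_two (by omega)
  simp only [F]
  rw [ZMod.val_natCast, jac_mod a M p hp_odd hMd hM2]
  have e : ((p % M : ℕ) : ZMod n) = (p : ZMod n) := by
    rw [ZMod.natCast_eq_natCast_iff]
    exact (Nat.mod_modEq _ M).of_dvd hnM
  rw [e]
  simp only [natCast_eq_one_iff n p hp.one_lt.le]

end ArtinAux

namespace ArtinAux

lemma jac_neg_one_one {u : ℕ} (hu : u % 4 = 1) : jacobiSym (-1) u = 1 := by
  rw [jacobiSym.at_neg_one (Nat.odd_iff.mpr (by omega)), ZMod.χ₄_nat_one_mod_four hu]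

lemma jac_neg_one_three {u : ℕ} (hu : u % 4 = 3) : jacobiSym (-1) u = -1 := by
  rw [jacobiSym.at_neg_one (Nat.odd_iff.mpr (by omega)), ZMod.χ₄_nat_three_mod_four hu]

lemma jac_recip (a : ℤ) (ha : a % 4 = 1) (u : ℕ) (hu : Odd u) :
    jacobiSym a u = jacobiSym u a.natAbs := by
  rcases le_or_gt 0 a with h | h
  · obtain ⟨m, rfl⟩ := Int.eq_ofNat_of_zero_le h
    rw [Int.natAbs_natCast]
    exact jacobiSym.quadratic_reciprocity_one_mod_four (by omega) hu
  · obtain ⟨m, hm⟩ := Int.eq_ofNat_of_zero_le (show 0 ≤ -a by omega)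
    have ha' : a = (-1) * (m : ℤ) := by omega
    have hm3 : m % 4 = 3 := by omega
    have hn : a.natAbs = m := by omega
    rw [hn, ha', jacobiSym.mul_left]
    have hu2 := Nat.odd_iff.mp hu
    rcases (by omega : u % 4 = 1 ∨ u % 4 = 3) with h1 | h3
    · rw [jac_neg_one_one h1, one_mul, ← jacobiSym.quadratic_reciprocity_one_mod_four h1 (Nat.odd_iff.mpr (by omega))]
    · rw [jac_neg_one_three h3, jacobiSym.quadratic_reciprocity_three_mod_four hm3 h3]
      ring

lemma jac_one_of_modEq (m u : ℕ) (h : u ≡ 1 [MOD m]) : jacobiSym u m = 1 := by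
  have : jacobiSym ((u : ℕ) : ℤ) m = jacobiSym 1 m := by
    apply jacobiSym.mod_left'
    have : ((u : ℕ) : ℤ) ≡ ((1 : ℕ) : ℤ) [ZMOD m] := Int.natCast_modEq_iff.mpr h
    exact this
  rw [this, jacobiSym.one_left]

lemma odd_part (n : ℕ) (hn : Squarefree n) : ∃ n' : ℕ, Odd n' ∧ (n = n' ∨ n = 2 * n') := by
  rcases Nat.even_or_odd' n with ⟨t, h | h⟩
  · refine ⟨t, ?_, Or.inr h⟩
    by_contra hc
    rw [Nat.not_odd_iff_even] at hc
    obtain ⟨s, hs⟩ := hc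
    have : 2 * 2 ∣ n := ⟨s, by omega⟩
    have := hn 2 this
    rw [Nat.isUnit_iff] at this; omega
  · exact ⟨n, ⟨t, h⟩, Or.inl rfl⟩

lemma natCast_one_of (n n' u : ℕ) (h : n = n' ∨ n = 2 * n') (hn' : Odd n') (hu : Odd u)
    (hu1 : u ≡ 1 [MOD n']) : (u : ZMod n) = 1 := by
  have : u ≡ 1 [MOD n] := by
    rcases h with rfl | rfl
    · exact hu1
    · refine (Nat.modEq_and_modEq_iff_modEq_mul (Nat.coprime_two_left.mpr hn')).mp ⟨?_, hu1⟩
      unfold Nat.ModEq; rw [Nat.odd_iff.mp hu]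
  simpa using (ZMod.natCast_eq_natCast_iff u 1 n).mpr this

lemma coprime_of_modEq_one {u m : ℕ} (h : u ≡ 1 [MOD m]) : Nat.Coprime u m := by
  have := h.gcd_eq
  rw [Nat.Coprime, this]; simp

/-- Case `g₁ ≡ 3 mod 4`. -/
lemma exists_u_three (a : ℤ) (ha : a % 4 = 3) (n : ℕ) (hn : Squarefree n) :
    ∃ u : ℕ, Nat.Coprime u (4 * a.natAbs * n) ∧ (u : ZMod n) = 1 ∧ jacobiSym a u = -1 := by
  obtain ⟨n', hn', hnn⟩ := odd_part n hn
  have hao : Odd a.natAbs := Nat.odd_iff.mpr (by omega)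
  have hco : Nat.Coprime 4 (a.natAbs * n') := by
    rw [show 4 = 2 ^ 2 by norm_num]
    exact Nat.Coprime.pow_left _ (Nat.coprime_two_left.mpr (hao.mul hn'))
  obtain ⟨u, hu4, hu1⟩ := Nat.chineseRemainder hco 3 1
  have hu4' : u % 4 = 3 := hu4
  have huo : Odd u := Nat.odd_iff.mpr (by omega)
  have hua : u ≡ 1 [MOD a.natAbs] := hu1.of_dvd (Dvd.intro _ rfl)
  have hun : u ≡ 1 [MOD n'] := hu1.of_dvd (Dvd.intro_left _ rfl)
  have hu2 : Nat.Coprime u 2 := Nat.coprime_two_right.mpr huo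
  refine ⟨u, ?_, natCast_one_of n n' u hnn hn' huo hun, ?_⟩
  · refine Nat.Coprime.mul_right (Nat.Coprime.mul_right ?_ (coprime_of_modEq_one hua)) ?_
    · rw [show 4 = 2 ^ 2 by norm_num]; exact hu2.pow_right _
    · rcases hnn with h | h
      · rw [h]; exact coprime_of_modEq_one hun
      · rw [h]; exact hu2.mul_right (coprime_of_modEq_one hun)
  · have e : a = (-1) * (-a) := by ring
    rw [e, jacobiSym.mul_left, jac_neg_one_three hu4', jac_recip (-a) (by omega) u huo, Int.natAbs_neg,
      jac_one_of_modEq _ _ hua]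
    ring

/-- Case `g₁` even. -/
lemma exists_u_two (a m : ℤ) (ham : a = 2 * m) (hm : m % 2 = 1) (n : ℕ) (hn : Squarefree n) :
    ∃ u : ℕ, Nat.Coprime u (4 * a.natAbs * n) ∧ (u : ZMod n) = 1 ∧ jacobiSym a u = -1 := by
  obtain ⟨n', hn', hnn⟩ := odd_part n hn
  have hmo : Odd m.natAbs := Nat.odd_iff.mpr (by omega)
  have hco : Nat.Coprime 8 (m.natAbs * n') := by
    rw [show 8 = 2 ^ 3 by norm_num]
    exact Nat.Coprime.pow_left _ (Nat.coprime_two_left.mpr (hmo.mul hn'))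
  obtain ⟨u, hu8, hu1⟩ := Nat.chineseRemainder hco 5 1
  have hu8' : u % 8 = 5 := hu8
  have huo : Odd u := Nat.odd_iff.mpr (by omega)
  have hum : u ≡ 1 [MOD m.natAbs] := hu1.of_dvd (Dvd.intro _ rfl)
  have hun : u ≡ 1 [MOD n'] := hu1.of_dvd (Dvd.intro_left _ rfl)
  have hu2 : Nat.Coprime u 2 := Nat.coprime_two_right.mpr huo
  refine ⟨u, ?_, natCast_one_of n n' u hnn hn' huo hun, ?_⟩
  · refine Nat.Coprime.mul_right (Nat.Coprime.mul_right ?_ ?_) ?_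
    · rw [show 4 = 2 ^ 2 by norm_num]; exact hu2.pow_right _
    · rw [show a.natAbs = 2 * m.natAbs by omega]; exact hu2.mul_right (coprime_of_modEq_one hum)
    · rcases hnn with h | h
      · rw [h]; exact coprime_of_modEq_one hun
      · rw [h]; exact hu2.mul_right (coprime_of_modEq_one hun)
  · have h2 : jacobiSym 2 u = -1 := by
      have := jacobiSym.even_odd (a := 2) (b := u) (by norm_num) (by omega)
      rw [if_pos (Or.inr hu8')] at this
      rw [← this]; simp [jacobiSym.one_left]
    have h3 : jacobiSym m u = 1 := by
      rcases (by omega : m % 4 = 1 ∨ m % 4 = 3) with h | h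
      · rw [jac_recip m h u huo, jac_one_of_modEq _ _ hum]
      · rw [show m = (-1) * (-m) by ring, jacobiSym.mul_left, jac_neg_one_one (by omega),
          jac_recip (-m) (by omega) u huo, Int.natAbs_neg, jac_one_of_modEq _ _ hum]; ring
    rw [ham, jacobiSym.mul_left, h2, h3]; ring

/-- Case `g₁ ≡ 1 mod 4`, a prime `q ∣ g₁` not dividing `n`. -/
lemma exists_u_one (a : ℤ) (ha : a % 4 = 1) (hsf : Squarefree a) (n q : ℕ) (hq : q.Prime)
    (hqa : q ∣ a.natAbs) (hqn : ¬ q ∣ n) :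
    ∃ u : ℕ, Nat.Coprime u (4 * a.natAbs * n) ∧ (u : ZMod n) = 1 ∧ jacobiSym a u = -1 := by
  obtain ⟨r, hr⟩ := hqa
  have hsf' : Squarefree a.natAbs := Int.squarefree_natAbs.mpr hsf
  have hao : Odd a.natAbs := Nat.odd_iff.mpr (by omega)
  have hqo : Odd q := by rw [hr] at hao; exact (Nat.odd_mul.mp hao).1
  have hqr : ¬ q ∣ r := by
    intro hd
    have := hsf' q (by rw [hr]; exact Nat.mul_dvd_mul_left q hd)
    exact hq.one_lt.ne' (Nat.isUnit_iff.mp this)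
  have hr0 : r ≠ 0 := by rintro rfl; simp at hqr
  have hco : Nat.Coprime q (4 * r * n) := by
    refine Nat.Coprime.mul_right (Nat.Coprime.mul_right ?_ ?_) ?_
    · rw [show 4 = 2 ^ 2 by norm_num]; exact (Nat.coprime_two_right.mpr hqo).pow_right _
    · exact hq.coprime_iff_not_dvd.mpr hqr
    · exact hq.coprime_iff_not_dvd.mpr hqn
  haveI := Fact.mk hq
  obtain ⟨x, hx⟩ := FiniteField.exists_nonsquare (F := ZMod q) (by
    rw [ZMod.ringChar_zmod_n]; rintro rfl; exact absurd hqo (by decide))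
  obtain ⟨u, huq, hu1⟩ := Nat.chineseRemainder hco x.val 1
  have hux : (u : ZMod q) = x := by
    rw [(ZMod.natCast_eq_natCast_iff u x.val q).mpr huq, ZMod.natCast_zmod_val]
  have hu4 : u ≡ 1 [MOD 4] := hu1.of_dvd ⟨r * n, by ring⟩
  have hu4' : u % 4 = 1 := hu4
  have huo : Odd u := Nat.odd_iff.mpr (by omega)
  have hur : u ≡ 1 [MOD r] := hu1.of_dvd ⟨4 * n, by ring⟩
  have hun : u ≡ 1 [MOD n] := hu1.of_dvd ⟨4 * r, by ring⟩
  have hJq : jacobiSym u q = -1 := by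
    rw [ZMod.nonsquare_iff_jacobiSym_eq_neg_one]
    simpa [hux] using hx
  have huq' : Nat.Coprime u q := by
    rw [Nat.coprime_comm, hq.coprime_iff_not_dvd, ← ZMod.natCast_eq_zero_iff, hux]
    rintro rfl
    exact hx (IsSquare.zero)
  refine ⟨u, ?_, ?_, ?_⟩
  · rw [hr]
    refine Nat.Coprime.mul_right (Nat.Coprime.mul_right (coprime_of_modEq_one hu4)
      (huq'.mul_right (coprime_of_modEq_one hur))) (coprime_of_modEq_one hun)
  · simpa using (ZMod.natCast_eq_natCast_iff u 1 n).mpr hun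
  · haveI : NeZero q := ⟨hq.ne_zero⟩
    haveI : NeZero r := ⟨hr0⟩
    rw [jac_recip a ha u huo, hr, jacobiSym.mul_right, hJq, jac_one_of_modEq r u hur]; ring

lemma dens_jac (k n : ℕ) (hn : Squarefree n) (a d : ℤ) (ha : Squarefree a)
    (hd : d = if a % 4 = 1 then a else 4 * a) :
    HasDens k (fun p => (jacobiSym a p : ℝ) * (if n ∣ p - 1 then 1 else 0))
      (if d.natAbs ∣ n then (n.totient : ℝ)⁻¹ else 0) := by
  have hn0 : n ≠ 0 := hn.ne_zero
  haveI : NeZero n := ⟨hn0⟩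
  have ha0 : a ≠ 0 := ha.ne_zero
  by_cases h4 : a % 4 = 1
  · rw [if_pos h4] at hd
    subst hd
    by_cases hdn : d.natAbs ∣ n
    · rw [if_pos hdn]
      refine (dens_dvd k n).congr 2 fun p hp hp2 => ?_
      by_cases hnp : n ∣ p - 1
      · rw [if_pos hnp, jac_recip d h4 p (hp.odd_of_ne_two (by omega)),
          jac_one_of_modEq]
        · simp
        · exact ((Nat.modEq_iff_dvd' hp.one_lt.le).mpr (hdn.trans hnp)).symm
      · simp [hnp]
    · rw [if_neg hdn]
      have : ∃ q : ℕ, q.Prime ∧ q ∣ d.natAbs ∧ ¬ q ∣ n := by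
        by_contra hcon
        push Not at hcon
        apply hdn
        rw [← Nat.prod_primeFactors_of_squarefree (Int.squarefree_natAbs.mpr ha)]
        refine Finset.prod_primes_dvd n (fun q hq => (Nat.prime_of_mem_primeFactors hq).prime) ?_
        intro q hq
        exact hcon q (Nat.prime_of_mem_primeFactors hq) (Nat.dvd_of_mem_primeFactors hq)
      obtain ⟨q, hq, hqd, hqn⟩ := this
      obtain ⟨u, h1, h2, h3⟩ := exists_u_one d h4 ha n q hq hqd hqn
      exact dens_jac_zero k n hn0 d ha0 u h1 h2 h3
  · rw [if_neg h4] at hd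
    have hdn : ¬ d.natAbs ∣ n := by
      intro hdn
      have : 2 * 2 ∣ n := Dvd.dvd.trans ⟨a.natAbs, by omega⟩ hdn
      have := hn 2 this
      rw [Nat.isUnit_iff] at this; omega
    rw [if_neg hdn]
    have ha4 : a % 4 ≠ 0 := by
      intro h
      have : (2 : ℤ) * 2 ∣ a := by omega
      have := ha 2 this
      rw [Int.isUnit_iff] at this; omega
    rcases (by omega : a % 4 = 3 ∨ a % 4 = 2) with h3 | h2
    · obtain ⟨u, h1, h2, h3⟩ := exists_u_three a h3 n hn
      exact dens_jac_zero k n hn0 a ha0 u h1 h2 h3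
    · obtain ⟨u, h1, h2, h3⟩ := exists_u_two a (a / 2) (by omega) (by omega) n hn
      exact dens_jac_zero k n hn0 a ha0 u h1 h2 h3

end ArtinAux

namespace ArtinAux

/-- primes below `z` -/
def QQ (z : ℕ) : Finset ℕ := (Finset.range z).filter Nat.Prime

noncomputable def xq (q : ℕ) : ℝ := -(1 / ((q : ℝ) * ((q : ℝ) - 1)))

noncomputable def fz (z p : ℕ) : ℝ := ∏ q ∈ QQ z, (1 + (if q ∣ p - 1 then -(1 / (q : ℝ)) else 0))

lemma one_sub_prod_le (s : Finset ℕ) (y : ℕ → ℝ) (h0 : ∀ q ∈ s, 0 ≤ y q) (h1 : ∀ q ∈ s, y q ≤ 1) :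
    1 - ∑ q ∈ s, y q ≤ ∏ q ∈ s, (1 - y q) ∧ ∏ q ∈ s, (1 - y q) ≤ 1 ∧ 0 ≤ ∏ q ∈ s, (1 - y q) := by
  induction s using Finset.induction_on with
  | empty => simp
  | insert i s hi ih =>
    obtain ⟨a, b, c⟩ := ih (fun q hq => h0 q (Finset.mem_insert_of_mem hq))
      (fun q hq => h1 q (Finset.mem_insert_of_mem hq))
    have h0i := h0 i (Finset.mem_insert_self _ _)
    have h1i := h1 i (Finset.mem_insert_self _ _)
    rw [Finset.prod_insert hi, Finset.sum_insert hi]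
    refine ⟨by nlinarith, by nlinarith, mul_nonneg (by linarith) c⟩

lemma totient_ratio (p : ℕ) (hp : p.Prime) :
    ((p - 1).totient : ℝ) / ((p : ℝ) - 1) = ∏ q ∈ (p - 1).primeFactors, (1 - 1 / (q : ℝ)) := by
  have h := Nat.totient_eq_mul_prod_factors (p - 1)
  have h' : ((p - 1).totient : ℝ) = ((p - 1 : ℕ) : ℝ) * ∏ q ∈ (p - 1).primeFactors, (1 - (q : ℝ)⁻¹) := by
    have := congrArg (fun t : ℚ => (t : ℝ)) h
    push_cast at this
    exact this
  have hp1 : (1 : ℝ) < p := by exact_mod_cast hp.one_lt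
  rw [h', Nat.cast_sub hp.one_lt.le, Nat.cast_one, mul_div_cancel_left₀ _ (by linarith)]
  simp only [one_div]

lemma fz_eq (z p : ℕ) (hp : p.Prime) :
    fz z p = ∏ q ∈ (p - 1).primeFactors.filter (fun q => ¬ z ≤ q), (1 - 1 / (q : ℝ)) := by
  unfold fz
  have e : (p - 1).primeFactors.filter (fun q => ¬ z ≤ q) = (QQ z).filter (fun q => q ∣ p - 1) := by
    have := hp.two_le
    ext q
    simp only [QQ, Finset.mem_filter, Nat.mem_primeFactors, Finset.mem_range]
    constructor
    · rintro ⟨⟨a, b, c⟩, d⟩; exact ⟨⟨by omega, a⟩, b⟩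
    · rintro ⟨⟨d, a⟩, b⟩; exact ⟨⟨a, b, by omega⟩, by omega⟩
  rw [e, Finset.prod_filter]
  refine Finset.prod_congr rfl fun q _ => ?_
  split_ifs <;> ring

lemma fz_sandwich (z p : ℕ) (hp : p.Prime) :
    0 ≤ fz z p - ((p - 1).totient : ℝ) / ((p : ℝ) - 1) ∧
    fz z p - ((p - 1).totient : ℝ) / ((p : ℝ) - 1)
      ≤ ∑ q ∈ (p - 1).primeFactors.filter (fun q => z ≤ q), (1 : ℝ) / q := by
  have h0 : ∀ q ∈ (p - 1).primeFactors, 0 ≤ 1 / (q : ℝ) := fun q _ => by positivity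
  have h1 : ∀ q ∈ (p - 1).primeFactors, 1 / (q : ℝ) ≤ 1 := fun q hq => by
    have : (1 : ℝ) ≤ q := by exact_mod_cast (Nat.prime_of_mem_primeFactors hq).one_lt.le
    rw [div_le_one (by linarith)]; exact this
  obtain ⟨a1, b1, c1⟩ := one_sub_prod_le ((p - 1).primeFactors.filter (fun q => z ≤ q)) (fun q => 1 / (q : ℝ))
    (fun q hq => h0 q (Finset.mem_filter.mp hq).1) (fun q hq => h1 q (Finset.mem_filter.mp hq).1)
  obtain ⟨a2, b2, c2⟩ := one_sub_prod_le ((p - 1).primeFactors.filter (fun q => ¬ z ≤ q)) (fun q => 1 / (q : ℝ))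
    (fun q hq => h0 q (Finset.mem_filter.mp hq).1) (fun q hq => h1 q (Finset.mem_filter.mp hq).1)
  rw [totient_ratio p hp, fz_eq z p hp,
    ← Finset.prod_filter_mul_prod_filter_not (p - 1).primeFactors (fun q => z ≤ q)]
  constructor <;> nlinarith

lemma prod_dvd_iff (s : Finset ℕ) (hs : ∀ q ∈ s, q.Prime) (m : ℕ) :
    ∏ q ∈ s, q ∣ m ↔ ∀ q ∈ s, q ∣ m :=
  ⟨fun h _ hq => (Finset.dvd_prod_of_mem (fun q => q) hq).trans h,
    fun h => Finset.prod_primes_dvd m (fun q hq => (hs q hq).prime) h⟩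

lemma fz_expand (z p : ℕ) :
    fz z p = ∑ s ∈ (QQ z).powerset, (∏ q ∈ s, -(1 / (q : ℝ))) * (if ∏ q ∈ s, q ∣ p - 1 then 1 else 0) := by
  unfold fz
  rw [Finset.prod_one_add]
  refine Finset.sum_congr rfl fun s hs => ?_
  have hsp : ∀ q ∈ s, q.Prime := fun q hq =>
    (Finset.mem_filter.mp (Finset.mem_powerset.mp hs hq)).2
  simp only [prod_dvd_iff s hsp]
  split_ifs with h
  · rw [mul_one]
    exact Finset.prod_congr rfl fun q hq => by rw [if_pos (h q hq)]
  · push Not at h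
    obtain ⟨q, hq, hqp⟩ := h
    rw [mul_zero]
    exact Finset.prod_eq_zero hq (by rw [if_neg hqp])

lemma coprime_prod_aux (i : ℕ) (s : Finset ℕ) (hi : i ∉ s) (hip : i.Prime) (hs : ∀ q ∈ s, q.Prime) :
    Nat.Coprime i (∏ q ∈ s, q) :=
  Nat.Coprime.prod_right fun q hq => (Nat.coprime_primes hip (hs q hq)).mpr (by rintro rfl; exact hi hq)

lemma sqf_prod (s : Finset ℕ) (hs : ∀ q ∈ s, q.Prime) : Squarefree (∏ q ∈ s, q) := by
  induction s using Finset.induction_on with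
  | empty => simp
  | insert i s hi ih =>
    have hs' : ∀ q ∈ s, q.Prime := fun q hq => hs q (Finset.mem_insert_of_mem hq)
    have hip := hs i (Finset.mem_insert_self _ _)
    rw [Finset.prod_insert hi, Nat.squarefree_mul (coprime_prod_aux i s hi hip hs')]
    exact ⟨hip.prime.squarefree, ih hs'⟩

lemma coef_eq (s : Finset ℕ) (hs : ∀ q ∈ s, q.Prime) :
    (∏ q ∈ s, -(1 / (q : ℝ))) * (((∏ q ∈ s, q).totient : ℕ) : ℝ)⁻¹ = ∏ q ∈ s, xq q := by
  induction s using Finset.induction_on with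
  | empty => simp
  | insert i s hi ih =>
    have hs' : ∀ q ∈ s, q.Prime := fun q hq => hs q (Finset.mem_insert_of_mem hq)
    have hip := hs i (Finset.mem_insert_self _ _)
    rw [Finset.prod_insert hi, Finset.prod_insert hi, Finset.prod_insert hi, ← ih hs',
      Nat.totient_mul (coprime_prod_aux i s hi hip hs'), Nat.totient_prime hip, Nat.cast_mul,
      Nat.cast_sub hip.one_lt.le, mul_inv, xq]
    simp only [one_div, mul_inv, Nat.cast_one]
    ring

lemma sum_sub (Q D : Finset ℕ) (hDQ : D ⊆ Q) (x : ℕ → ℝ) (hx : ∀ q ∈ D, 1 + x q ≠ 0) :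
    ∑ s ∈ Q.powerset, (if D ⊆ s then ∏ q ∈ s, x q else 0)
      = (∏ q ∈ Q, (1 + x q)) * ∏ q ∈ D, (x q / (1 + x q)) := by
  have h1 : ∏ q ∈ Q, (x q + (if q ∈ D then (0 : ℝ) else 1))
      = ∑ s ∈ Q.powerset, (if D ⊆ s then ∏ q ∈ s, x q else 0) := by
    rw [Finset.prod_add]
    refine Finset.sum_congr rfl fun s hs => ?_
    split_ifs with h
    · rw [Finset.prod_eq_one (s := Q \ s), mul_one]
      intro q hq
      rw [if_neg]
      intro hqD
      exact (Finset.mem_sdiff.mp hq).2 (h hqD)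
    · obtain ⟨q, hqD, hqs⟩ := Finset.not_subset.mp h
      rw [Finset.prod_eq_zero (Finset.mem_sdiff.mpr ⟨hDQ hqD, hqs⟩) (by rw [if_pos hqD]), mul_zero]
  rw [← h1, ← Finset.prod_sdiff hDQ, ← Finset.prod_sdiff hDQ, mul_assoc, ← Finset.prod_mul_distrib]
  congr 1
  · refine Finset.prod_congr rfl fun q hq => ?_
    rw [if_neg (Finset.mem_sdiff.mp hq).2, add_comm]
  · refine Finset.prod_congr rfl fun q hq => ?_
    rw [if_pos hq, add_zero, mul_div_cancel₀ _ (hx q hq)]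

lemma xq_one_add (q : ℕ) (hq : q.Prime) : 1 + xq q ≠ 0 ∧
    xq q / (1 + xq q) = - (1 / ((q : ℝ) ^ 2 - q - 1)) := by
  have h2 : (2 : ℝ) ≤ q := by exact_mod_cast hq.two_le
  have h3 : (q : ℝ) ^ 2 - q - 1 ≠ 0 := by nlinarith
  have h4 : (q : ℝ) * (q - 1) ≠ 0 := by
    apply mul_ne_zero <;> linarith
  have e : 1 + xq q = ((q : ℝ) ^ 2 - q - 1) / (q * (q - 1)) := by
    unfold xq
    rw [eq_div_iff h4, add_mul, neg_mul, one_div, inv_mul_cancel₀ h4]; ring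
  refine ⟨by rw [e]; exact div_ne_zero h3 h4, ?_⟩
  rw [e]
  unfold xq
  rw [neg_div, div_div_div_cancel_right₀ h4]

lemma moebius_term (d : ℤ) (Q : Finset ℕ) (hQ : ∀ q ∈ Q, q.Prime)
    (hDQ : d.natAbs.primeFactors ⊆ Q) :
    ∑ s ∈ Q.powerset, (if d.natAbs ∣ ∏ q ∈ s, q then ∏ q ∈ s, xq q else 0)
      = (∏ q ∈ Q, (1 + xq q)) * ((ArithmeticFunction.moebius d.natAbs : ℝ) *
        ∏ q ∈ d.natAbs.primeFactors, (1 / ((q : ℝ) ^ 2 - q - 1))) := by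
  by_cases hsf : Squarefree d.natAbs
  · have h1 : ∀ s ∈ Q.powerset, (if d.natAbs ∣ ∏ q ∈ s, q then ∏ q ∈ s, xq q else 0)
        = (if d.natAbs.primeFactors ⊆ s then ∏ q ∈ s, xq q else 0) := by
      intro s hs
      have hsp : ∀ q ∈ s, q.Prime := fun q hq => hQ q (Finset.mem_powerset.mp hs hq)
      have : d.natAbs ∣ ∏ q ∈ s, q ↔ d.natAbs.primeFactors ⊆ s := by
        conv_lhs => rw [← Nat.prod_primeFactors_of_squarefree hsf]
        rw [prod_dvd_iff _ (fun q hq => Nat.prime_of_mem_primeFactors hq)]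
        constructor
        · intro h q hq
          obtain ⟨r, hr, hqr⟩ := (Nat.prime_of_mem_primeFactors hq).prime.exists_mem_finset_dvd (h q hq)
          rwa [(Nat.prime_dvd_prime_iff_eq (Nat.prime_of_mem_primeFactors hq) (hsp r hr)).mp hqr]
        · intro h q hq
          exact Finset.dvd_prod_of_mem (fun q => q) (h hq)
      simp only [this]
    rw [Finset.sum_congr rfl h1, sum_sub Q _ hDQ xq fun q hq =>
      (xq_one_add q (Nat.prime_of_mem_primeFactors hq)).1]
    congr 1
    rw [Finset.prod_congr rfl fun q hq => (xq_one_add q (Nat.prime_of_mem_primeFactors hq)).2,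
      Finset.prod_neg]
    congr 1
    rw [ArithmeticFunction.moebius_apply_of_squarefree hsf,
      ← (ArithmeticFunction.cardDistinctFactors_eq_cardFactors_iff_squarefree hsf.ne_zero).mpr hsf,
      ArithmeticFunction.cardDistinctFactors_apply]
    push_cast
    rfl
  · rw [ArithmeticFunction.moebius_eq_zero_of_not_squarefree hsf]
    simp only [Int.cast_zero, zero_mul, mul_zero]
    refine Finset.sum_eq_zero fun s hs => ?_
    rw [if_neg]
    intro h
    exact hsf ((sqf_prod s fun q hq => hQ q (Finset.mem_powerset.mp hs hq)).squarefree_of_dvd h)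

/-- density of the truncated weight -/
lemma dens_fz (k z : ℕ) (a d : ℤ) (ha : Squarefree a) (hd : d = if a % 4 = 1 then a else 4 * a)
    (hz : d.natAbs < z) :
    HasDens k (fun p => (1 - (jacobiSym a p : ℝ)) / 2 * fz z p)
      ((∏ q ∈ QQ z, (1 + xq q)) * (1 - (ArithmeticFunction.moebius d.natAbs : ℝ) *
        ∏ q ∈ d.natAbs.primeFactors, (1 / ((q : ℝ) ^ 2 - q - 1))) / 2) := by
  have ha0 := ha.ne_zero
  have hd0 : d ≠ 0 := by rw [hd]; split_ifs <;> simp [ha0]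
  have hQ : ∀ q ∈ QQ z, q.Prime := fun q hq => (Finset.mem_filter.mp hq).2
  have hDQ : d.natAbs.primeFactors ⊆ QQ z := by
    intro q hq
    have h1 := Nat.le_of_dvd (by omega) (Nat.dvd_of_mem_primeFactors hq)
    exact Finset.mem_filter.mpr ⟨Finset.mem_range.mpr (by omega), Nat.prime_of_mem_primeFactors hq⟩
  have hs : ∀ s ∈ (QQ z).powerset, ∀ q ∈ s, q.Prime := fun s hs q hq =>
    hQ q (Finset.mem_powerset.mp hs hq)
  have h1 := HasDens.sum (k := k) (QQ z).powerset (fun s hs' => by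
    haveI : NeZero (∏ q ∈ s, q) := ⟨(sqf_prod s (hs s hs')).ne_zero⟩
    exact (dens_dvd k (∏ q ∈ s, q)).const_mul (∏ q ∈ s, -(1 / (q : ℝ))))
  have h2 := HasDens.sum (k := k) (QQ z).powerset (fun s hs' =>
    (dens_jac k (∏ q ∈ s, q) (sqf_prod s (hs s hs')) a d ha hd).const_mul (∏ q ∈ s, -(1 / (q : ℝ))))
  have h3 := (h1.sub h2).const_mul (1 / 2)
  have e1 : ∑ s ∈ (QQ z).powerset, (∏ q ∈ s, -(1 / (q : ℝ))) * (((∏ q ∈ s, q).totient : ℕ) : ℝ)⁻¹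
      = ∏ q ∈ QQ z, (1 + xq q) := by
    rw [Finset.prod_one_add]
    exact Finset.sum_congr rfl fun s hs' => coef_eq s (hs s hs')
  have e2 : ∑ s ∈ (QQ z).powerset, (∏ q ∈ s, -(1 / (q : ℝ))) *
      (if d.natAbs ∣ ∏ q ∈ s, q then (((∏ q ∈ s, q).totient : ℕ) : ℝ)⁻¹ else 0)
      = (∏ q ∈ QQ z, (1 + xq q)) * ((ArithmeticFunction.moebius d.natAbs : ℝ) *
        ∏ q ∈ d.natAbs.primeFactors, (1 / ((q : ℝ) ^ 2 - q - 1))) := by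
    rw [← moebius_term d (QQ z) hQ hDQ]
    refine Finset.sum_congr rfl fun s hs' => ?_
    rw [mul_ite, mul_zero, coef_eq s (hs s hs')]
  rw [e1, e2] at h3
  convert h3.congr 0 (c' := fun p => (1 - (jacobiSym a p : ℝ)) / 2 * fz z p) ?_ using 1
  · ring
  · intro p _ _
    rw [fz_expand, ← Finset.sum_sub_distrib, Finset.mul_sum, Finset.mul_sum]
    refine Finset.sum_congr rfl fun s _ => ?_
    ring

lemma dens_half (k : ℕ) (a d : ℤ) (ha : Squarefree a) (ha1 : a ≠ 1)
    (hd : d = if a % 4 = 1 then a else 4 * a) :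
    HasDens k (fun p => (1 - (jacobiSym a p : ℝ)) / 2) (1 / 2) := by
  have h1 := dens_dvd k 1
  have h2 := dens_jac k 1 squarefree_one a d ha hd
  have hd1 : ¬ d.natAbs ∣ 1 := by
    rw [Nat.dvd_one, hd]
    split_ifs with h
    · intro h'; omega
    · intro h'; omega
  rw [if_neg hd1] at h2
  have h3 := (h1.sub h2).const_mul (1 / 2)
  convert h3 using 1
  · funext p; simp; ring
  · simp

lemma prod_tendsto : Tendsto (fun z => ∏ q ∈ QQ z, (1 + xq q)) atTop
    (nhds (∏' p : Nat.Primes, (1 - 1 / (((p : ℕ) : ℝ) * (((p : ℕ) : ℝ) - 1))))) := by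
  let f : ℕ → ℝ := fun q => if q.Prime then xq q else 0
  have hsum : Summable f := by
    refine Summable.of_norm_bounded (g := fun q : ℕ => 2 * (1 / (q : ℝ) ^ 2))
      ((Real.summable_one_div_nat_pow.mpr (by norm_num)).mul_left 2) fun q => ?_
    simp only [f]
    split_ifs with hq
    · have h2 : (2 : ℝ) ≤ q := by exact_mod_cast hq.two_le
      have h4 : 0 < (q : ℝ) * (q - 1) := by nlinarith
      rw [xq, norm_neg, Real.norm_of_nonneg (by positivity), ← mul_div_assoc, mul_one,
        div_le_div_iff₀ h4 (by positivity)]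
      nlinarith
    · rw [norm_zero]; positivity
  have hm : Multipliable fun q => 1 + f q := Real.multipliable_one_add_of_summable hsum
  have ht := hm.hasProd.tendsto_prod_nat
  have e : ∏' q, (1 + f q) = ∏' p : Nat.Primes, (1 - 1 / (((p : ℕ) : ℝ) * (((p : ℕ) : ℝ) - 1))) := by
    have h1 := tprod_subtype_eq_of_mulSupport_subset (f := fun q => 1 + f q) (s := {p : ℕ | p.Prime}) (by
      intro q hq
      by_contra hc
      apply hq
      simp only [f]
      rw [if_neg (show ¬ q.Prime from hc), add_zero])
    rw [← h1]
    refine tprod_congr fun (p : {p : ℕ // p.Prime}) => ?_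
    simp only [f]
    rw [if_pos p.2, xq]; ring
  rw [e] at ht
  refine ht.congr fun z => ?_
  rw [QQ, Finset.prod_filter]
  refine Finset.prod_congr rfl fun q _ => ?_
  simp only [f]
  split_ifs <;> simp

end ArtinAux

namespace ArtinAux

lemma jac_half (a : ℤ) (p : ℕ) : 0 ≤ (1 - (jacobiSym a p : ℝ)) / 2 ∧ (1 - (jacobiSym a p : ℝ)) / 2 ≤ 1 := by
  rcases jacobiSym.trichotomy a p with h | h | h <;> rw [h] <;> norm_num

lemma dens_main (k : ℕ) (a d : ℤ) (ha : Squarefree a) (hd : d = if a % 4 = 1 then a else 4 * a) :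
    HasDens k (fun p => (1 - (jacobiSym a p : ℝ)) / 2 * (((p - 1).totient : ℝ) / ((p : ℝ) - 1)))
      ((∏' p : Nat.Primes, (1 - 1 / (((p : ℕ) : ℝ) * (((p : ℕ) : ℝ) - 1)))) *
        (1 - (ArithmeticFunction.moebius d.natAbs : ℝ) *
        ∏ q ∈ d.natAbs.primeFactors, (1 / ((q : ℝ) ^ 2 - q - 1))) / 2) := by
  set B : ℝ := 1 - (ArithmeticFunction.moebius d.natAbs : ℝ) *
        ∏ q ∈ d.natAbs.primeFactors, (1 / ((q : ℝ) ^ 2 - q - 1)) with hB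
  set A : ℝ := ∏' p : Nat.Primes, (1 - 1 / (((p : ℕ) : ℝ) * (((p : ℕ) : ℝ) - 1))) with hA
  have hα : Tendsto (fun z => (∏ q ∈ QQ z, (1 + xq q)) * B / 2) atTop (nhds (A * B / 2)) :=
    (prod_tendsto.mul_const B).div_const 2
  unfold HasDens
  rw [Metric.tendsto_atTop']
  intro ε hε
  obtain ⟨z₀, hz₀⟩ := tail_bound k (ε / 3) (by positivity)
  have hαe := (Metric.tendsto_nhds.mp hα) (ε / 3) (by positivity)
  obtain ⟨z, hz1, hz2, hz3⟩ := (hαe.and ((eventually_ge_atTop z₀).and (eventually_gt_atTop d.natAbs))).exists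
  have hD := dens_fz k z a d ha hd hz3
  unfold HasDens at hD
  have hDe := (Metric.tendsto_nhds.mp hD) (ε / 3) (by positivity)
  obtain ⟨n₀, hn₀⟩ := eventually_atTop.mp ((hz₀ z hz2).and (hDe.and (WS_pos k)))
  refine ⟨n₀, fun n hn => ?_⟩
  obtain ⟨t1, t2, t3⟩ := hn₀ n hn.le
  rw [Real.dist_eq] at *
  set S1 := ∑ p ∈ (Finset.range n).filter Nat.Prime,
    (1 - (jacobiSym a p : ℝ)) / 2 * (((p - 1).totient : ℝ) / ((p : ℝ) - 1)) * wt k p with hS1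
  set S2 := ∑ p ∈ (Finset.range n).filter Nat.Prime,
    (1 - (jacobiSym a p : ℝ)) / 2 * fz z p * wt k p with hS2
  have hdiff : S2 - S1 = ∑ p ∈ (Finset.range n).filter Nat.Prime,
      (1 - (jacobiSym a p : ℝ)) / 2 * (fz z p - ((p - 1).totient : ℝ) / ((p : ℝ) - 1)) * wt k p := by
    rw [hS1, hS2, ← Finset.sum_sub_distrib]
    exact Finset.sum_congr rfl fun p _ => by ring
  have hlo : 0 ≤ S2 - S1 := by
    rw [hdiff]
    refine Finset.sum_nonneg fun p hp => ?_
    have hpp := (Finset.mem_filter.mp hp).2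
    exact mul_nonneg (mul_nonneg (jac_half a p).1 (fz_sandwich z p hpp).1) (wt_nonneg k p hpp.one_lt.le)
  have hhi : S2 - S1 ≤ ε / 3 * WS k n := by
    rw [hdiff]
    refine le_trans (Finset.sum_le_sum fun p hp => ?_) t1
    have hpp := (Finset.mem_filter.mp hp).2
    have h1 := fz_sandwich z p hpp
    have h2 := jac_half a p
    refine mul_le_mul_of_nonneg_right ?_ (wt_nonneg k p hpp.one_lt.le)
    refine le_trans ?_ h1.2
    calc _ ≤ 1 * (fz z p - ((p - 1).totient : ℝ) / ((p : ℝ) - 1)) :=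
          mul_le_mul_of_nonneg_right h2.2 h1.1
      _ = _ := one_mul _
  have h3 : abs (S1 / WS k n - S2 / WS k n) ≤ ε / 3 := by
    rw [abs_sub_comm, ← sub_div, abs_of_nonneg (div_nonneg hlo t3.le), div_le_iff₀ t3]
    exact hhi
  have e : S1 / WS k n - A * B / 2 = (S1 / WS k n - S2 / WS k n)
      + (S2 / WS k n - (∏ q ∈ QQ z, (1 + xq q)) * B / 2)
      + ((∏ q ∈ QQ z, (1 + xq q)) * B / 2 - A * B / 2) := by ring
  rw [e]
  refine lt_of_le_of_lt (abs_add_three _ _ _) ?_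
  linarith

lemma sum_nth (F : ℕ → ℝ) (N : ℕ) : ∑ i ∈ Finset.range N, F (Nat.nth Nat.Prime i)
    = ∑ p ∈ (Finset.range (Nat.nth Nat.Prime N)).filter Nat.Prime, F p := by
  induction N with
  | zero =>
    rw [Finset.range_zero, Finset.sum_empty, Nat.nth_prime_zero_eq_two]
    rw [Finset.sum_eq_zero]
    intro p hp
    rw [Finset.mem_filter, Finset.mem_range] at hp
    exact absurd hp.2.two_le (by omega)
  | succ N ih =>
    rw [Finset.sum_range_succ, ih, Nat.filter_range_nth_eq_insert_of_infinite Nat.infinite_setOf_prime,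
      Finset.sum_insert, add_comm]
    simp

lemma ind_eq (g g₁ m : ℤ) (hg : g = g₁ * m ^ 2) (hg0 : g ≠ 0) (p : ℕ) (hp : p.Prime) (hpg : g.natAbs < p) :
    (if jacobiSym g p = -1 then (1 : ℝ) else 0) = (1 - (jacobiSym g₁ p : ℝ)) / 2 := by
  have hcop : ∀ x : ℤ, x ∣ g → x.gcd p = 1 := by
    intro x hx
    rw [Int.gcd_eq_natAbs, Int.natAbs_natCast, Nat.gcd_comm]
    refine (hp.coprime_iff_not_dvd).mpr fun h => ?_
    have h1 := Nat.le_of_dvd (Int.natAbs_pos.mpr hg0) (h.trans (Int.natAbs_dvd_natAbs.mpr hx))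
    omega
  have h1 : jacobiSym g p = jacobiSym g₁ p := by
    rw [hg, jacobiSym.mul_left, jacobiSym.sq_one' (hcop m ⟨g₁ * m, by rw [hg]; ring⟩), mul_one]
  rw [h1]
  rcases jacobiSym.eq_one_or_neg_one (hcop g₁ ⟨m ^ 2, hg⟩) with h | h <;> rw [h] <;> norm_num

theorem final (g : ℤ) (hg : 1 < |g|) (hsq : ¬ IsSquare g) (g₁ : ℤ) (hg₁ : Squarefree g₁)
    (hker : ∃ m : ℤ, g = g₁ * m ^ 2) (d : ℤ) (hd : d = if g₁ % 4 = 1 then g₁ else 4 * g₁) (k : ℕ) :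
    Tendsto (fun N : ℕ =>
      (∑ i ∈ (Finset.range N).filter (fun i => @legendreSym (Nat.nth Nat.Prime i) ⟨Nat.prime_nth_prime i⟩ g = -1),
        (Nat.nth Nat.Prime i : ℝ) ^ k * ((Nat.nth Nat.Prime i - 1).totient : ℝ)) /
      (∑ i ∈ (Finset.range N).filter (fun i => @legendreSym (Nat.nth Nat.Prime i) ⟨Nat.prime_nth_prime i⟩ g = -1),
        (Nat.nth Nat.Prime i : ℝ) ^ k * ((Nat.nth Nat.Prime i : ℝ) - 1))) atTop
      (nhds ((∏' p : Nat.Primes, (1 - 1 / (((p : ℕ) : ℝ) * (((p : ℕ) : ℝ) - 1)))) *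
        (1 - (ArithmeticFunction.moebius d.natAbs : ℝ) *
        ∏ q ∈ d.natAbs.primeFactors, (1 / ((q : ℝ) ^ 2 - q - 1))))) := by
  obtain ⟨m, hm⟩ := hker
  have hg0 : g ≠ 0 := by rintro rfl; simp at hg
  have hg1 : g₁ ≠ 1 := by
    rintro rfl
    exact hsq ⟨m, by rw [hm]; ring⟩
  have hnum : HasDens k (fun p => (if jacobiSym g p = -1 then (1 : ℝ) else 0) *
      (((p - 1).totient : ℝ) / ((p : ℝ) - 1))) _ :=
    (dens_main k g₁ d hg₁ hd).congr g.natAbs fun p hp hpg => by rw [ind_eq g g₁ m hm hg0 p hp hpg]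
  have hden : HasDens k (fun p => if jacobiSym g p = -1 then (1 : ℝ) else 0) (1 / 2) :=
    (dens_half k g₁ d hg₁ hg1 hd).congr g.natAbs fun p hp hpg => by rw [ind_eq g g₁ m hm hg0 p hp hpg]
  have hnth : Tendsto (Nat.nth Nat.Prime) atTop atTop :=
    (Nat.nth_strictMono Nat.infinite_setOf_prime).tendsto_atTop
  have hlim := (Tendsto.div hnum hden (by norm_num)).comp hnth
  rw [div_div_div_cancel_right₀ (by norm_num), div_one] at hlim
  refine hlim.congr' ?_
  filter_upwards [hnth.eventually (WS_pos k)] with N hW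
  simp only [Function.comp, Pi.div_apply]
  rw [div_div_div_cancel_right₀ hW.ne']
  congr 1
  · rw [← sum_nth (fun p => (if jacobiSym g p = -1 then (1 : ℝ) else 0) *
      (((p - 1).totient : ℝ) / ((p : ℝ) - 1)) * wt k p), Finset.sum_filter]
    refine Finset.sum_congr rfl fun i _ => ?_
    have hp := Nat.prime_nth_prime i
    have h1 : (1 : ℝ) < Nat.nth Nat.Prime i := by exact_mod_cast hp.one_lt
    have hne : (Nat.nth Nat.Prime i : ℝ) - 1 ≠ 0 := by linarith
    rw [@jacobiSym.legendreSym.to_jacobiSym (Nat.nth Nat.Prime i) ⟨hp⟩ g]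
    split_ifs
    · rw [wt]; field_simp
    · ring
  · rw [← sum_nth (fun p => (if jacobiSym g p = -1 then (1 : ℝ) else 0) * wt k p), Finset.sum_filter]
    refine Finset.sum_congr rfl fun i _ => ?_
    have hp := Nat.prime_nth_prime i
    rw [@jacobiSym.legendreSym.to_jacobiSym (Nat.nth Nat.Prime i) ⟨hp⟩ g]
    split_ifs
    · rw [wt]; ring
    · ring

end ArtinAux

/-- For `g` not a perfect power and not a square, with `g₁` the squarefree kernel of `g`
and `d` the discriminant of `ℚ(√g)`, and any `k ≥ 0`, the ratio
`(∑' p^k φ(p-1)) / (∑' p^k (p-1))` over the primes `p` among the first `N` primes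
with Legendre symbol `(g/p) = -1` tends to
`A(g) = A · (1 - μ(|d|) ∏_{q | d} 1/(q² - q - 1))`. -/
theorem artin_ratio_formula_g (g : ℤ) (hg : 1 < |g|)
    (hpow : ∀ (g₀ : ℤ) (m : ℕ), 2 ≤ m → g ≠ g₀ ^ m)
    (hsq : ¬ IsSquare g)
    (g₁ : ℤ) (hg₁ : Squarefree g₁) (hker : ∃ m : ℤ, g = g₁ * m ^ 2)
    (d : ℤ) (hd : d = if g₁ % 4 = 1 then g₁ else 4 * g₁)
    (k : ℕ) :
    Tendsto (fun N : ℕ =>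
        (∑ i ∈ (Finset.range N).filter (fun i =>
            @legendreSym (Nat.nth Nat.Prime i) ⟨Nat.prime_nth_prime i⟩ g = -1),
          (Nat.nth Nat.Prime i : ℝ) ^ k * ((Nat.nth Nat.Prime i - 1).totient : ℝ)) /
        (∑ i ∈ (Finset.range N).filter (fun i =>
            @legendreSym (Nat.nth Nat.Prime i) ⟨Nat.prime_nth_prime i⟩ g = -1),
          (Nat.nth Nat.Prime i : ℝ) ^ k * ((Nat.nth Nat.Prime i : ℝ) - 1)))
      atTop
      (nhds (artinConstant *
        (1 - (ArithmeticFunction.moebius d.natAbs : ℝ) *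
          ∏ q ∈ d.natAbs.primeFactors, (1 / ((q : ℝ) ^ 2 - q - 1))))) := by
  exact ArtinAux.final g hg hsq g₁ hg₁ hker d hd k
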